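/- arXiv:2207.05305 — 3 statements merged into one kernel-verified Lean document; each statement's English description precedes it below -/
import Mathlib

section
/- min{ f(x) : (x,y,z,α,β,γ,σ) ∈ P_F } = min{ f(x) : (x,y,z) ∈ P_basic }, i.e., the compact multicommodity-flow formulation P_F has the same optimal objective value as the basic formulation P_basic of the joint order batching and picker routing problem. -/
namespace JOBPRP

/-- Vertices of a rectangular warehouse with `n` picking aisles and `q` blocks
(hence `q + 1` cross-aisles), where subaisle `(i,j)` contains `m i j + 1`
picking locations.  `Sum.inl (i, j)` is the artificial location in cross-aisle
`j` at aisle `i`; `Sum.inr ⟨i, j, k⟩` is the `k`-th picking location (from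
north to south) of subaisle `(i,j)`. -/
abbrev WV (n q : ℕ) (m : Fin n → Fin q → ℕ) : Type :=
  (Fin n × Fin (q + 1)) ⊕ ((i : Fin n) × (j : Fin q) × Fin (m i j + 1))

variable {n q : ℕ} {m : Fin n → Fin q → ℕ}

/-- the artificial location at aisle `i` on cross-aisle `j` -/
def art (i : Fin n) (j : Fin (q + 1)) : WV n q m := Sum.inl (i, j)

/-- the `k`-th picking location of subaisle `(i,j)`; the northern endpoint of
subaisle `(i,j)` is `f (i,j) = art i j.castSucc` and its southern endpoint is
`l (i,j) = art i j.succ` -/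
def pk (i : Fin n) (j : Fin q) (k : Fin (m i j + 1)) : WV n q m := Sum.inr ⟨i, j, k⟩

/-- the set `V_I` of artificial locations -/
def VI : Set (WV n q m) := Set.range fun p : Fin n × Fin (q + 1) => Sum.inl p

/-- the set `V_L` of picking locations -/
def VL : Set (WV n q m) := Set.range Sum.inr

/-- the adjacent northern location `n(v)` of the picking location `pk i j k` -/
def nb (i : Fin n) (j : Fin q) (k : Fin (m i j + 1)) : WV n q m :=
  if (k : ℕ) = 0 then art i j.castSucc
  else pk i j ⟨(k : ℕ) - 1, lt_of_le_of_lt (Nat.sub_le _ _) k.isLt⟩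

/-- the adjacent southern location `s(v)` of the picking location `pk i j k` -/
def sb (i : Fin n) (j : Fin q) (k : Fin (m i j + 1)) : WV n q m :=
  if h : (k : ℕ) = m i j then art i j.succ
  else pk i j ⟨(k : ℕ) + 1, by have hk := k.isLt; omega⟩

/-- the arcs joining neighboring artificial locations within a cross-aisle, in
both directions -/
def crossArcs : Set (WV n q m × WV n q m) :=
  { a | ∃ (i i' : Fin n) (j : Fin (q + 1)), (i' : ℕ) = (i : ℕ) + 1 ∧
      (a = (art i j, art i' j) ∨ a = (art i' j, art i j)) }

/-- the arcs joining neighboring locations within a picking aisle, in both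
directions -/
def subArcs : Set (WV n q m × WV n q m) :=
  { a | ∃ (i : Fin n) (j : Fin q) (k : Fin (m i j + 1)),
      a = (nb i j k, pk i j k) ∨ a = (pk i j k, nb i j k) ∨
      a = (sb i j k, pk i j k) ∨ a = (pk i j k, sb i j k) }

/-- the arc set `Ẽ` of the digraph `G̃` obtained from the warehouse graph by
replacing each edge by two opposite arcs -/
def Etilde : Set (WV n q m × WV n q m) := subArcs ∪ crossArcs

/-- the arc set `Ẽ'` of the reduced graph on the artificial locations: each
subaisle `(i,j)` contributes the two opposite arcs between its endpoints
`f (i,j)` and `l (i,j)`, and each cross-aisle segment contributes two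
opposite arcs -/
def Ered : Set (WV n q m × WV n q m) :=
  { a | ∃ (i : Fin n) (j : Fin q),
      a = (art i j.castSucc, art i j.succ) ∨ a = (art i j.succ, art i j.castSucc) }
    ∪ crossArcs

/-- `δ⁺(S)`: the arcs of `Ẽ` leaving `S` -/
def dplus (S : Set (WV n q m)) : Set (WV n q m × WV n q m) :=
  { a | a ∈ Etilde (m := m) ∧ a.1 ∈ S ∧ a.2 ∉ S }

/-- `δ⁻(S)`: the arcs of `Ẽ` entering `S` -/
def dminus (S : Set (WV n q m)) : Set (WV n q m × WV n q m) :=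
  { a | a ∈ Etilde (m := m) ∧ a.1 ∉ S ∧ a.2 ∈ S }

/-- `η⁺(S)`: the arcs of `Ẽ'` leaving `S` -/
def etaplus (S : Set (WV n q m)) : Set (WV n q m × WV n q m) :=
  { a | a ∈ Ered (m := m) ∧ a.1 ∈ S ∧ a.2 ∉ S }

/-- `η⁻(S)`: the arcs of `Ẽ'` entering `S` -/
def etaminus (S : Set (WV n q m)) : Set (WV n q m × WV n q m) :=
  { a | a ∈ Ered (m := m) ∧ a.1 ∉ S ∧ a.2 ∈ S }

/-- the sum `∑_{a ∈ S} g a` over a set `S` of a finite type -/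
noncomputable def ssum {A : Type*} [Fintype A] (S : Set A) (g : A → ℝ) : ℝ :=
  ∑ a, S.indicator g a

section Formulations

variable (T : ℕ) {O : Type*} [Fintype O]

/-- the objective function `f(x) = ∑_{t ∈ T} ∑_{(u,v) ∈ Ẽ} d_{uv} x_{t,(u,v)}` -/
noncomputable def obj (d : WV n q m → WV n q m → ℝ)
    (x : Fin T → WV n q m × WV n q m → ℝ) : ℝ :=
  ∑ t, ssum (Etilde (m := m)) fun a => d a.1 a.2 * x t a

/-- The basic formulation `P_basic` of the joint order batching and picker
routing problem.  `R` is the domain of the variables (`{0,1}` for the integer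
formulation, `[0,1]` for its LP relaxation), `s0` is the origin, `L o` the set
of picking locations of order `o`, `b o` the size of order `o` and `B` the
capacity of each picker.  Variables indexed by arcs outside `Ẽ` are fixed
to `0`. -/
def Pbasic (R : Set ℝ) (s0 : WV n q m) (L : O → Set (WV n q m)) (b : O → ℝ) (B : ℝ)
    (x : Fin T → WV n q m × WV n q m → ℝ) (y : Fin T → WV n q m → ℝ)
    (z : O → Fin T → ℝ) : Prop :=
  (∀ t a, x t a ∈ R) ∧ (∀ t v, y t v ∈ R) ∧ (∀ o t, z o t ∈ R) ∧
  (∀ t a, a ∉ Etilde (m := m) → x t a = 0) ∧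
  -- each picker leaves the origin
  (∀ t, 1 ≤ ssum (dplus (m := m) {s0}) (x t)) ∧
  -- if picker `t` picks order `o` then it leaves each location of `L o`
  (∀ t (o : O), ∀ u ∈ L o, z o t ≤ ssum (dplus (m := m) {u}) (x t)) ∧
  -- `y` dominates `x` on the arcs leaving `u ∈ V \ {s}`
  (∀ t u v, u ≠ s0 → (u, v) ∈ Etilde (m := m) → x t (u, v) ≤ y t u) ∧
  -- connectivity constraints
  (∀ t (S : Set (WV n q m)), s0 ∉ S → 2 ≤ S.ncard →
    ∀ u0 ∈ S, y t u0 ≤ ssum (dplus (m := m) S) (x t)) ∧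
  -- flow conservation
  (∀ t v, ssum (dplus (m := m) {v}) (x t) = ssum (dminus (m := m) {v}) (x t)) ∧
  -- each order is assigned to exactly one picker
  (∀ o : O, ∑ t, z o t = 1) ∧
  -- capacity constraints
  (∀ t, ∑ o, b o * z o t ≤ B)

/-- The subaisle cuts `P_sub` (constraints (19)–(25)), with auxiliary
variables `α` and `β` on the picking locations. -/
def Psub (R : Set ℝ) (L : O → Set (WV n q m))
    (x : Fin T → WV n q m × WV n q m → ℝ) (z : O → Fin T → ℝ)
    (α β : Fin T → WV n q m → ℝ) : Prop :=
  (∀ t v, α t v ∈ R) ∧ (∀ t v, β t v ∈ R) ∧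
  -- α_{t v} ≥ α_{t s(v)} for every picking location except the southernmost
  (∀ t i j (k : Fin (m i j + 1)), (k : ℕ) ≠ m i j →
    α t (sb i j k) ≤ α t (pk i j k)) ∧
  -- x_{t (n(v), v)} ≥ α_{t v}
  (∀ t i j (k : Fin (m i j + 1)), α t (pk i j k) ≤ x t (nb i j k, pk i j k)) ∧
  -- β_{t v} ≥ β_{t n(v)} for every picking location except the northernmost
  (∀ t i j (k : Fin (m i j + 1)), (k : ℕ) ≠ 0 →
    β t (nb i j k) ≤ β t (pk i j k)) ∧
  -- x_{t (s(v), v)} ≥ β_{t v}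
  (∀ t i j (k : Fin (m i j + 1)), β t (pk i j k) ≤ x t (sb i j k, pk i j k)) ∧
  -- α_{t v} + β_{t v} ≥ z_{o t} for all picking locations of order `o`
  (∀ t (o : O), ∀ v ∈ L o, z o t ≤ α t v + β t v)

/-- The formulation `P_g` (constraints (26)–(42)), which forces all visited
artificial locations into the connected component of the origin via the
auxiliary variables `γ` on the arcs of the reduced graph `Ẽ'`. -/
def Pg (R : Set ℝ) (s0 : WV n q m) (L : O → Set (WV n q m)) (b : O → ℝ) (B : ℝ)
    (x : Fin T → WV n q m × WV n q m → ℝ) (y : Fin T → WV n q m → ℝ)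
    (z : O → Fin T → ℝ) (α β : Fin T → WV n q m → ℝ)
    (γ : Fin T → WV n q m × WV n q m → ℝ) : Prop :=
  (∀ t a, x t a ∈ R) ∧ (∀ t v, y t v ∈ R) ∧ (∀ o t, z o t ∈ R) ∧
  (∀ t a, γ t a ∈ R) ∧
  (∀ t a, a ∉ Etilde (m := m) → x t a = 0) ∧
  (∀ t a, a ∉ Ered (m := m) → γ t a = 0) ∧
  -- each picker leaves the origin
  (∀ t, 1 ≤ ssum (dplus (m := m) {s0}) (x t)) ∧
  -- if picker `t` picks order `o` then it leaves each location of `L o`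
  (∀ t (o : O), ∀ u ∈ L o, z o t ≤ ssum (dplus (m := m) {u}) (x t)) ∧
  -- `y` dominates `x` on the arcs leaving an artificial location `u ≠ s`
  (∀ t u v, u ∈ VI (m := m) → u ≠ s0 → (u, v) ∈ Etilde (m := m) →
    x t (u, v) ≤ y t u) ∧
  -- x = γ on the cross-aisle arcs
  (∀ t a, a ∈ crossArcs (m := m) → x t a = γ t a) ∧
  -- α_{t n(l(i))} ≥ γ_{t (f(i), l(i))}
  (∀ t i j, γ t (art i (Fin.castSucc j), art i (Fin.succ j)) ≤
    α t (pk i j (Fin.last (m i j)))) ∧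
  -- x_{t (n(l(i)), l(i))} ≥ γ_{t (f(i), l(i))}
  (∀ t i j, γ t (art i (Fin.castSucc j), art i (Fin.succ j)) ≤
    x t (pk i j (Fin.last (m i j)), art i (Fin.succ j))) ∧
  -- β_{t s(f(i))} ≥ γ_{t (l(i), f(i))}
  (∀ t i j, γ t (art i (Fin.succ j), art i (Fin.castSucc j)) ≤ β t (pk i j 0)) ∧
  -- x_{t (s(f(i)), f(i))} ≥ γ_{t (l(i), f(i))}
  (∀ t i j, γ t (art i (Fin.succ j), art i (Fin.castSucc j)) ≤
    x t (pk i j 0, art i (Fin.castSucc j))) ∧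
  -- connectivity cuts on the reduced graph
  (∀ t (S : Set (WV n q m)), S ⊆ VI (m := m) → s0 ∉ S → 2 ≤ S.ncard →
    ∀ u0 ∈ S, y t u0 ≤ ssum (etaplus (m := m) S) (γ t)) ∧
  -- flow conservation
  (∀ t v, ssum (dplus (m := m) {v}) (x t) = ssum (dminus (m := m) {v}) (x t)) ∧
  -- each order is assigned to exactly one picker
  (∀ o : O, ∑ t, z o t = 1) ∧
  -- capacity constraints
  (∀ t, ∑ o, b o * z o t ≤ B)

/-- The flow-based formulation `P_f` (constraints (26)–(34) and (36)–(46)):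
the cut constraints of `P_g` are replaced by an auxiliary multicommodity flow
`σ` on the reduced graph, one commodity for each artificial location `v0`. -/
def Pf (R : Set ℝ) (s0 : WV n q m) (L : O → Set (WV n q m)) (b : O → ℝ) (B : ℝ)
    (x : Fin T → WV n q m × WV n q m → ℝ) (y : Fin T → WV n q m → ℝ)
    (z : O → Fin T → ℝ) (α β : Fin T → WV n q m → ℝ)
    (γ : Fin T → WV n q m × WV n q m → ℝ)
    (σ : Fin T → WV n q m → WV n q m × WV n q m → ℝ) : Prop :=
  (∀ t a, x t a ∈ R) ∧ (∀ t v, y t v ∈ R) ∧ (∀ o t, z o t ∈ R) ∧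
  (∀ t a, γ t a ∈ R) ∧
  (∀ t a, a ∉ Etilde (m := m) → x t a = 0) ∧
  (∀ t a, a ∉ Ered (m := m) → γ t a = 0) ∧
  (∀ t, 1 ≤ ssum (dplus (m := m) {s0}) (x t)) ∧
  (∀ t (o : O), ∀ u ∈ L o, z o t ≤ ssum (dplus (m := m) {u}) (x t)) ∧
  (∀ t u v, u ∈ VI (m := m) → u ≠ s0 → (u, v) ∈ Etilde (m := m) →
    x t (u, v) ≤ y t u) ∧
  (∀ t a, a ∈ crossArcs (m := m) → x t a = γ t a) ∧
  (∀ t i j, γ t (art i (Fin.castSucc j), art i (Fin.succ j)) ≤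
    α t (pk i j (Fin.last (m i j)))) ∧
  (∀ t i j, γ t (art i (Fin.castSucc j), art i (Fin.succ j)) ≤
    x t (pk i j (Fin.last (m i j)), art i (Fin.succ j))) ∧
  (∀ t i j, γ t (art i (Fin.succ j), art i (Fin.castSucc j)) ≤ β t (pk i j 0)) ∧
  (∀ t i j, γ t (art i (Fin.succ j), art i (Fin.castSucc j)) ≤
    x t (pk i j 0, art i (Fin.castSucc j))) ∧
  (∀ t v, ssum (dplus (m := m) {v}) (x t) = ssum (dminus (m := m) {v}) (x t)) ∧
  (∀ o : O, ∑ t, z o t = 1) ∧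
  (∀ t, ∑ o, b o * z o t ≤ B) ∧
  -- the commodity of `v0` has net outflow `y_{t,v0}` at `v0`
  (∀ t v0, v0 ∈ VI (m := m) →
    ssum (etaplus (m := m) {v0}) (σ t v0) -
      ssum (etaminus (m := m) {v0}) (σ t v0) = y t v0) ∧
  -- flow conservation at every other artificial location `u ∉ {s, v0}`
  (∀ t v0 u, v0 ∈ VI (m := m) → u ∈ VI (m := m) → u ≠ s0 → u ≠ v0 →
    ssum (etaplus (m := m) {u}) (σ t v0) -
      ssum (etaminus (m := m) {u}) (σ t v0) = 0) ∧
  -- the commodity of `v0` has net outflow `-y_{t,v0}` at the origin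
  (∀ t v0, v0 ∈ VI (m := m) →
    ssum (etaplus (m := m) {s0}) (σ t v0) -
      ssum (etaminus (m := m) {s0}) (σ t v0) = -(y t v0)) ∧
  -- the flow is nonnegative and bounded by γ on the arcs of `Ẽ'`
  (∀ t v0 a, v0 ∈ VI (m := m) → a ∈ Ered (m := m) →
    0 ≤ σ t v0 a ∧ σ t v0 a ≤ γ t a) ∧
  (∀ t v0 a, a ∉ Ered (m := m) → σ t v0 a = 0) ∧
  (∀ t v0 a, v0 ∉ VI (m := m) → σ t v0 a = 0)


theorem aux_net_identity {V : Type*} [Fintype V] (c : V → ℝ) (g : V × V → ℝ) :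
    ∑ u, c u * (∑ w, g (u, w) - ∑ w, g (w, u)) = ∑ u, ∑ w, (c u - c w) * g (u, w) := by
  simp only [mul_sub, sub_mul, Finset.sum_sub_distrib, Finset.mul_sum]
  congr 1
  rw [Finset.sum_comm]

theorem aux_out {V : Type*} [Fintype V] (E : Set (V × V)) (g : V × V → ℝ)
    (hg : ∀ a, a ∉ E → g a = 0) (hl : ∀ v, (v, v) ∉ E) (v : V) :
    ssum {a | a ∈ E ∧ a.1 ∈ ({v} : Set V) ∧ a.2 ∉ ({v} : Set V)} g = ∑ w, g (v, w) := by
  classical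
  unfold ssum
  rw [Fintype.sum_prod_type, Finset.sum_eq_single v]
  · refine Finset.sum_congr rfl fun w _ => ?_
    by_cases hE : (v, w) ∈ E
    · have : w ≠ v := by rintro rfl; exact hl _ hE
      rw [Set.indicator_of_mem]; exact ⟨hE, rfl, this⟩
    · rw [hg _ hE, Set.indicator_of_notMem]; exact fun h => hE h.1
  · intro u _ hu
    refine Finset.sum_eq_zero fun w _ => ?_
    rw [Set.indicator_of_notMem]; exact fun h => hu h.2.1
  · simp

theorem aux_in {V : Type*} [Fintype V] (E : Set (V × V)) (g : V × V → ℝ)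
    (hg : ∀ a, a ∉ E → g a = 0) (hl : ∀ v, (v, v) ∉ E) (v : V) :
    ssum {a | a ∈ E ∧ a.1 ∉ ({v} : Set V) ∧ a.2 ∈ ({v} : Set V)} g = ∑ w, g (w, v) := by
  classical
  unfold ssum
  rw [Fintype.sum_prod_type_right, Finset.sum_eq_single v]
  · refine Finset.sum_congr rfl fun w _ => ?_
    by_cases hE : (w, v) ∈ E
    · have : w ≠ v := by rintro rfl; exact hl _ hE
      rw [Set.indicator_of_mem]; exact ⟨hE, this, rfl⟩
    · rw [hg _ hE, Set.indicator_of_notMem]; exact fun h => hE h.1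
  · intro u _ hu
    refine Finset.sum_eq_zero fun w _ => ?_
    rw [Set.indicator_of_notMem]; exact fun h => hu h.2.2
  · simp

theorem aux_exists_of_ssum {A : Type*} [Fintype A] (S : Set A) (g : A → ℝ)
    (h : 1 ≤ ssum S g) : ∃ a ∈ S, g a ≠ 0 := by
  by_contra! hc
  have : ssum S g = 0 := Finset.sum_eq_zero fun a _ => by
    by_cases ha : a ∈ S
    · rw [Set.indicator_of_mem ha, hc a ha]
    · rw [Set.indicator_of_notMem ha]
  linarith

theorem aux_ssum_ge {A : Type*} [Fintype A] (S : Set A) (g : A → ℝ) (h0 : ∀ a, 0 ≤ g a)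
    (a : A) (ha : a ∈ S) (h : g a = 1) : 1 ≤ ssum S g := by
  have := Finset.single_le_sum (f := fun a => S.indicator g a)
    (fun b _ => Set.indicator_nonneg (fun a _ => h0 a) b) (Finset.mem_univ a)
  simp only [Set.indicator_of_mem ha, h] at this
  exact this

/-- a circulation: a set closed under incoming arcs is closed under outgoing arcs -/
theorem aux_euler {V : Type*} [Fintype V] (g : V × V → ℝ) (h0 : ∀ a, 0 ≤ g a)
    (hc : ∀ v, ∑ w, g (v, w) = ∑ w, g (w, v)) (C : Set V)
    (hC : ∀ u w, g (u, w) ≠ 0 → w ∈ C → u ∈ C) :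
    ∀ u w, g (u, w) ≠ 0 → u ∈ C → w ∈ C := by
  classical
  have key := aux_net_identity (fun u => if u ∈ C then (1 : ℝ) else 0) g
  simp only [hc, sub_self, mul_zero, Finset.sum_const_zero] at key
  have hnn : ∀ u w, 0 ≤ ((if u ∈ C then (1 : ℝ) else 0) - (if w ∈ C then (1 : ℝ) else 0)) * g (u, w) := by
    intro u w
    by_cases h1 : g (u, w) = 0
    · simp [h1]
    · have h2 := hC u w h1
      have h3 := h0 (u, w)
      by_cases hu : u ∈ C
      · by_cases hw : w ∈ C <;> simp [hu, hw, h3]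
      · have hw : w ∉ C := fun hw => hu (h2 hw)
        simp [hu, hw]
  intro u w hg hu
  by_contra hw
  have h1 := (Finset.sum_eq_zero_iff_of_nonneg
    (fun u _ => Finset.sum_nonneg fun w _ => hnn u w)).1 key.symm u (Finset.mem_univ _)
  have h2 := (Finset.sum_eq_zero_iff_of_nonneg (fun w _ => hnn u w)).1 h1 w (Finset.mem_univ _)
  simp [hu, hw] at h2
  exact hg h2

theorem aux_euler' {V : Type*} [Fintype V] (g : V × V → ℝ) (h0 : ∀ a, 0 ≤ g a)
    (hc : ∀ v, ∑ w, g (v, w) = ∑ w, g (w, v)) (C : Set V)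
    (hC : ∀ u w, g (u, w) ≠ 0 → u ∈ C → w ∈ C) :
    ∀ u w, g (u, w) ≠ 0 → w ∈ C → u ∈ C := by
  intro u w h hw
  by_contra hu
  exact aux_euler g h0 hc Cᶜ (fun a b hab hb ha => hb (hC a b hab ha)) u w h hu hw

theorem aux_flow_reach {V : Type*} [Fintype V] (g : V × V → ℝ) (h0 : ∀ a, 0 ≤ g a) (v s : V)
    (hv : 0 < ∑ w, g (v, w) - ∑ w, g (w, v))
    (hz : ∀ u, u ≠ s → u ≠ v → ∑ w, g (u, w) - ∑ w, g (w, u) = 0) :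
    Relation.ReflTransGen (fun a b => g (a, b) ≠ 0) v s := by
  classical
  by_contra hs
  set C : Set V := {u | Relation.ReflTransGen (fun a b => g (a, b) ≠ 0) v u} with hCdef
  have key := aux_net_identity (fun u => if u ∈ C then (1 : ℝ) else 0) g
  have hvC : v ∈ C := Relation.ReflTransGen.refl
  have hsC : s ∉ C := hs
  have hle : ∑ u, ∑ w, ((if u ∈ C then (1 : ℝ) else 0) - (if w ∈ C then (1 : ℝ) else 0)) * g (u, w) ≤ 0 := by
    refine Finset.sum_nonpos fun u _ => Finset.sum_nonpos fun w _ => ?_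
    by_cases h1 : g (u, w) = 0
    · simp [h1]
    · have h2 : u ∈ C → w ∈ C := fun hu => Relation.ReflTransGen.tail hu h1
      have h3 := h0 (u, w)
      by_cases hw : w ∈ C
      · by_cases hu : u ∈ C <;> simp [hu, hw, h3]
      · have hu : u ∉ C := fun hu => hw (h2 hu)
        simp [hu, hw]
  rw [Finset.sum_eq_single v] at key
  · simp only [hvC, if_true, one_mul] at key
    linarith
  · intro u _ hu
    by_cases hus : u = s
    · subst hus; simp [hsC]
    · rw [hz u hus hu, mul_zero]
  · simp

def auxLayer {V : Type*} (r : V → V → Prop) (s : V) : ℕ → V → Prop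
  | 0, v => v = s
  | k + 1, v => ∃ w, r v w ∧ auxLayer r s k w

theorem aux_layer_flow {V : Type*} [Fintype V] [DecidableEq V] (r : V → V → Prop) (s : V) :
    ∀ (N : ℕ) (v : V), auxLayer r s N v → (∀ k < N, ¬ auxLayer r s k v) →
    ∃ g : V × V → ℝ, (∀ a, 0 ≤ g a ∧ g a ≤ 1) ∧ (∀ a, g a ≠ 0 → r a.1 a.2) ∧
      (∀ a, g a ≠ 0 → ∃ k ≤ N, auxLayer r s k a.1) ∧
      ∀ u, ∑ w, g (u, w) - ∑ w, g (w, u) =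
        (if u = v then 1 else 0) - (if u = s then 1 else 0) := by
  intro N
  induction N with
  | zero =>
    intro v hv _
    have hv : v = s := hv
    subst hv
    exact ⟨fun _ => 0, by simp, by simp, by simp, by simp⟩
  | succ N ih =>
    rintro v ⟨w, hvw, hw⟩ hmin
    obtain ⟨g, h1, h2, h3, h4⟩ := ih w hw
      (fun k hk hkw => hmin (k + 1) (by omega) ⟨w, hvw, hkw⟩)
    have hg0 : g (v, w) = 0 := by
      by_contra hne
      obtain ⟨k, hk, hkv⟩ := h3 _ hne
      exact hmin k (by omega) hkv
    refine ⟨fun a => g a + if a = (v, w) then 1 else 0, ?_, ?_, ?_, ?_⟩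
    · intro a
      by_cases ha : a = (v, w)
      · subst ha; simp [hg0]
      · simpa [ha] using h1 a
    · intro a hne
      by_cases ha : a = (v, w)
      · subst ha; exact hvw
      · exact h2 a (by simpa [ha] using hne)
    · intro a hne
      by_cases ha : a = (v, w)
      · subst ha; exact ⟨N + 1, le_rfl, w, hvw, hw⟩
      · obtain ⟨k, hk, h⟩ := h3 a (by simpa [ha] using hne)
        exact ⟨k, by omega, h⟩
    · intro u
      have e1 : ∑ b, (if (u, b) = (v, w) then (1 : ℝ) else 0) = if u = v then 1 else 0 := by
        by_cases h : u = v <;> simp [h]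
      have e2 : ∑ b, (if (b, u) = (v, w) then (1 : ℝ) else 0) = if u = w then 1 else 0 := by
        by_cases h : u = w <;> simp [h]
      simp only [Finset.sum_add_distrib, e1, e2]
      linarith [h4 u]

theorem aux_reach_flow {V : Type*} [Fintype V] [DecidableEq V] (r : V → V → Prop) (v s : V)
    (h : Relation.ReflTransGen r v s) :
    ∃ g : V × V → ℝ, (∀ a, 0 ≤ g a ∧ g a ≤ 1) ∧ (∀ a, g a ≠ 0 → r a.1 a.2) ∧
      ∀ u, ∑ w, g (u, w) - ∑ w, g (w, u) =
        (if u = v then 1 else 0) - (if u = s then 1 else 0) := by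
  classical
  have hex : ∃ N, auxLayer r s N v := by
    induction h using Relation.ReflTransGen.head_induction_on with
    | refl => exact ⟨0, rfl⟩
    | head hab _ ih => obtain ⟨N, hN⟩ := ih; exact ⟨N + 1, _, hab, hN⟩
  obtain ⟨g, h1, h2, _, h4⟩ := aux_layer_flow r s (Nat.find hex) v (Nat.find_spec hex)
    (fun k hk => Nat.find_min hex hk)
  exact ⟨g, h1, h2, h4⟩

theorem nb_zero (i : Fin n) (j : Fin q) (k : Fin (m i j + 1)) (h : (k : ℕ) = 0) :
    (nb i j k : WV n q m) = art i j.castSucc := by simp [nb, h]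

theorem nb_succ (i : Fin n) (j : Fin q) (k k' : Fin (m i j + 1)) (h : (k : ℕ) = k' + 1) :
    (nb i j k : WV n q m) = pk i j k' := by
  have h0 : (k : ℕ) ≠ 0 := by omega
  simp only [nb, h0, if_false]
  congr 1
  ext
  simp [h]

theorem sb_last (i : Fin n) (j : Fin q) (k : Fin (m i j + 1)) (h : (k : ℕ) = m i j) :
    (sb i j k : WV n q m) = art i j.succ := by simp [sb, h]

theorem sb_succ (i : Fin n) (j : Fin q) (k k' : Fin (m i j + 1)) (h : (k' : ℕ) = k + 1) :
    (sb i j k : WV n q m) = pk i j k' := by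
  have h0 : (k : ℕ) ≠ m i j := by have := k'.isLt; omega
  simp only [sb, h0, dif_neg, not_false_eq_true]
  congr 1
  ext
  simp [h]

theorem nb_cases (i : Fin n) (j : Fin q) (k : Fin (m i j + 1)) :
    (k : ℕ) = 0 ∨ ∃ k' : Fin (m i j + 1), (k : ℕ) = k' + 1 := by
  by_cases h : (k : ℕ) = 0
  · exact Or.inl h
  · exact Or.inr ⟨⟨k - 1, by have := k.isLt; omega⟩, by simp; omega⟩

theorem sb_cases (i : Fin n) (j : Fin q) (k : Fin (m i j + 1)) :
    (k : ℕ) = m i j ∨ ∃ k' : Fin (m i j + 1), (k' : ℕ) = k + 1 := by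
  by_cases h : (k : ℕ) = m i j
  · exact Or.inl h
  · exact Or.inr ⟨⟨k + 1, by have := k.isLt; omega⟩, rfl⟩

theorem pk_inj (i : Fin n) (j : Fin q) (k k' : Fin (m i j + 1))
    (h : (pk i j k : WV n q m) = pk i j k') : k = k' := by
  simpa [pk] using h

theorem nb_ne (i : Fin n) (j : Fin q) (k : Fin (m i j + 1)) : (nb i j k : WV n q m) ≠ pk i j k := by
  rcases nb_cases i j k with h | ⟨k', h⟩
  · rw [nb_zero i j k h]; simp [art, pk]
  · rw [nb_succ i j k k' h]; intro e; have := pk_inj i j _ _ e; subst this; omega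

theorem sb_ne (i : Fin n) (j : Fin q) (k : Fin (m i j + 1)) : (sb i j k : WV n q m) ≠ pk i j k := by
  rcases sb_cases i j k with h | ⟨k', h⟩
  · rw [sb_last i j k h]; simp [art, pk]
  · rw [sb_succ i j k k' h]; intro e; have := pk_inj i j _ _ e; subst this; omega

theorem art_inj (i i' : Fin n) (j j' : Fin (q + 1)) (h : (art i j : WV n q m) = art i' j') :
    i = i' ∧ j = j' := by
  simpa [art] using h

theorem cross_noloop (v : WV n q m) : (v, v) ∉ crossArcs (m := m) := by
  rintro ⟨i, i', j, h, e | e⟩ <;>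
  · rw [Prod.mk.injEq] at e
    have := art_inj _ _ _ _ (e.1.symm.trans e.2)
    rw [this.1] at h; omega

theorem Etilde_noloop (v : WV n q m) : (v, v) ∉ Etilde (m := m) := by
  rintro (⟨i, j, k, e | e | e | e⟩ | h)
  · rw [Prod.mk.injEq] at e; exact nb_ne i j k (e.1.symm.trans e.2)
  · rw [Prod.mk.injEq] at e; exact nb_ne i j k (e.2.symm.trans e.1)
  · rw [Prod.mk.injEq] at e; exact sb_ne i j k (e.1.symm.trans e.2)
  · rw [Prod.mk.injEq] at e; exact sb_ne i j k (e.2.symm.trans e.1)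
  · exact cross_noloop v h

theorem Fin_cs_ne (j : Fin q) : j.castSucc ≠ j.succ := by
  intro e; have := congrArg Fin.val e; simp at this

theorem Ered_noloop (v : WV n q m) : (v, v) ∉ Ered (m := m) := by
  rintro (⟨i, j, e | e⟩ | h)
  · rw [Prod.mk.injEq] at e; exact Fin_cs_ne j (art_inj _ _ _ _ (e.1.symm.trans e.2)).2
  · rw [Prod.mk.injEq] at e; exact Fin_cs_ne j (art_inj _ _ _ _ (e.2.symm.trans e.1)).2
  · exact cross_noloop v h

theorem aux_lift {V : Type*} (r r' : V → V → Prop)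
    (h : ∀ a b, r a b → Relation.ReflTransGen r' a b) (u w : V)
    (hr : Relation.ReflTransGen r u w) : Relation.ReflTransGen r' u w := by
  induction hr with
  | refl => exact Relation.ReflTransGen.refl
  | tail _ hbc ih => exact ih.trans (h _ _ hbc)

theorem aux_exit {V : Type*} (r : V → V → Prop) (u s : V) (S : Set V)
    (h : Relation.ReflTransGen r u s) (hu : u ∈ S) (hs : s ∉ S) :
    ∃ a b, r a b ∧ a ∈ S ∧ b ∉ S ∧ Relation.ReflTransGen r a s := by
  induction h using Relation.ReflTransGen.head_induction_on with
  | refl => exact absurd hu hs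
  | @head a c hac hcs ih =>
    by_cases hc : c ∈ S
    · exact ih hc
    · exact ⟨a, c, hac, hu, hc, Relation.ReflTransGen.head hac hcs⟩

theorem aux_bin {r : ℝ} (h : r ∈ ({0, 1} : Set ℝ)) : r = 0 ∨ r = 1 := by simpa using h

theorem aux_bin_nn {r : ℝ} (h : r ∈ ({0, 1} : Set ℝ)) : 0 ≤ r := by
  rcases aux_bin h with h | h <;> rw [h] <;> norm_num

theorem aux_bin_ne {r : ℝ} (h : r ∈ ({0, 1} : Set ℝ)) (h0 : r ≠ 0) : r = 1 := by
  rcases aux_bin h with h | h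
  · exact absurd h h0
  · exact h

theorem dout (g : WV n q m × WV n q m → ℝ) (hg : ∀ a, a ∉ Etilde (m := m) → g a = 0)
    (v : WV n q m) : ssum (dplus (m := m) {v}) g = ∑ w, g (v, w) :=
  aux_out (Etilde (m := m)) g hg Etilde_noloop v

theorem din (g : WV n q m × WV n q m → ℝ) (hg : ∀ a, a ∉ Etilde (m := m) → g a = 0)
    (v : WV n q m) : ssum (dminus (m := m) {v}) g = ∑ w, g (w, v) :=
  aux_in (Etilde (m := m)) g hg Etilde_noloop v

theorem eout (g : WV n q m × WV n q m → ℝ) (hg : ∀ a, a ∉ Ered (m := m) → g a = 0)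
    (v : WV n q m) : ssum (etaplus (m := m) {v}) g = ∑ w, g (v, w) :=
  aux_out (Ered (m := m)) g hg Ered_noloop v

theorem ein (g : WV n q m × WV n q m → ℝ) (hg : ∀ a, a ∉ Ered (m := m) → g a = 0)
    (v : WV n q m) : ssum (etaminus (m := m) {v}) g = ∑ w, g (w, v) :=
  aux_in (Ered (m := m)) g hg Ered_noloop v

theorem alpha_reach (x : WV n q m × WV n q m → ℝ) (α : WV n q m → ℝ)
    (hα : ∀ v, α v ∈ ({0, 1} : Set ℝ))
    (h1 : ∀ i j (k : Fin (m i j + 1)), (k : ℕ) ≠ m i j → α (sb i j k) ≤ α (pk i j k))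
    (h2 : ∀ i j (k : Fin (m i j + 1)), α (pk i j k) ≤ x (nb i j k, pk i j k))
    (i : Fin n) (j : Fin q) : ∀ (N : ℕ) (k : Fin (m i j + 1)), (k : ℕ) = N → α (pk i j k) ≠ 0 →
      Relation.ReflTransGen (fun a b => x (a, b) ≠ 0) (art i j.castSucc) (pk i j k) ∧
      x (art i j.castSucc, pk i j 0) ≠ 0 := by
  intro N
  induction N with
  | zero =>
    intro k hk hne
    have e := aux_bin_ne (hα _) hne
    have h := h2 i j k
    rw [nb_zero i j k hk, e] at h
    have hk0 : k = 0 := by ext; simpa using hk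
    have hx : x (art i j.castSucc, pk i j k) ≠ 0 := by linarith
    exact ⟨Relation.ReflTransGen.single hx, hk0 ▸ hx⟩
  | succ N ih =>
    intro k hk hne
    have e := aux_bin_ne (hα _) hne
    have h := h2 i j k
    obtain ⟨k', hk'⟩ : ∃ k' : Fin (m i j + 1), (k : ℕ) = k' + 1 := by
      rcases nb_cases i j k with h | h
      · omega
      · exact h
    have h' := h1 i j k' (by have := k.isLt; omega)
    rw [sb_succ i j k' k hk', e] at h'
    rw [nb_succ i j k k' hk', e] at h
    obtain ⟨r1, r2⟩ := ih k' (by omega) (by linarith)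
    exact ⟨r1.tail (by linarith), r2⟩

theorem beta_reach (x : WV n q m × WV n q m → ℝ) (β : WV n q m → ℝ)
    (hβ : ∀ v, β v ∈ ({0, 1} : Set ℝ))
    (h1 : ∀ i j (k : Fin (m i j + 1)), (k : ℕ) ≠ 0 → β (nb i j k) ≤ β (pk i j k))
    (h2 : ∀ i j (k : Fin (m i j + 1)), β (pk i j k) ≤ x (sb i j k, pk i j k))
    (i : Fin n) (j : Fin q) : ∀ (N : ℕ) (k : Fin (m i j + 1)), (k : ℕ) + N = m i j →
      β (pk i j k) ≠ 0 →
      Relation.ReflTransGen (fun a b => x (a, b) ≠ 0) (art i j.succ) (pk i j k) ∧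
      x (art i j.succ, pk i j (Fin.last _)) ≠ 0 := by
  intro N
  induction N with
  | zero =>
    intro k hk hne
    have e := aux_bin_ne (hβ _) hne
    have h := h2 i j k
    rw [sb_last i j k hk, e] at h
    have hk0 : k = Fin.last _ := by ext; simpa using hk
    have hx : x (art i j.succ, pk i j k) ≠ 0 := by linarith
    exact ⟨Relation.ReflTransGen.single hx, hk0 ▸ hx⟩
  | succ N ih =>
    intro k hk hne
    have e := aux_bin_ne (hβ _) hne
    have h := h2 i j k
    obtain ⟨k', hk'⟩ : ∃ k' : Fin (m i j + 1), (k' : ℕ) = k + 1 := by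
      rcases sb_cases i j k with h | h
      · omega
      · exact h
    have h' := h1 i j k' (by omega)
    rw [nb_succ i j k' k hk', e] at h'
    rw [sb_succ i j k k' hk', e] at h
    obtain ⟨r1, r2⟩ := ih k' (by omega) (by linarith)
    exact ⟨r1.tail (by linarith), r2⟩

theorem nb0_mem (i : Fin n) (j : Fin q) :
    ((art i j.castSucc, pk i j 0) : WV n q m × WV n q m) ∈ Etilde (m := m) :=
  Or.inl ⟨i, j, 0, Or.inl (by rw [nb_zero i j 0 (by simp)])⟩

theorem sbl_mem (i : Fin n) (j : Fin q) :
    ((art i j.succ, pk i j (Fin.last _)) : WV n q m × WV n q m) ∈ Etilde (m := m) :=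
  Or.inl ⟨i, j, Fin.last _, Or.inr (Or.inr (Or.inl (by rw [sb_last i j _ (by simp)])))⟩

theorem F_to_basic (s0 : WV n q m)
    (L : O → Set (WV n q m)) (hL : ∀ o, L o ⊆ VL) (b : O → ℝ) (B : ℝ)
    (d : WV n q m → WV n q m → ℝ)
    (hdpos : ∀ a ∈ Etilde (m := m), 0 < d a.1 a.2) (x y z α β γ σ)
    (hf : Pf T ({0, 1} : Set ℝ) s0 L b B x y z α β γ σ)
    (hs : Psub T ({0, 1} : Set ℝ) L x z α β) :
    ∃ x' y', Pbasic T ({0, 1} : Set ℝ) s0 L b B x' y' z ∧ obj T d x' ≤ obj T d x := by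
  classical
  obtain ⟨fx, fy, fz, fγ, fx0, fγ0, fs, fL, fxy, fc, fa1, fa2, fb1, fb2, fcons, fz1, fB,
    s1, s2, s3, s4, s5, s6⟩ := hf
  obtain ⟨pα, pβ, pa1, pa2, pb1, pb2, pz⟩ := hs
  have hcons : ∀ t v, ∑ w, x t (v, w) = ∑ w, x t (w, v) := fun t v => by
    rw [← dout (x t) (fx0 t), ← din (x t) (fx0 t)]; exact fcons t v
  have xnn : ∀ t a, 0 ≤ x t a := fun t a => aux_bin_nn (fx t a)
  let C : Fin T → Set (WV n q m) := fun t =>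
    {u | Relation.ReflTransGen (fun a b => x t (a, b) ≠ 0) u s0}
  have Cin : ∀ t u w, x t (u, w) ≠ 0 → w ∈ C t → u ∈ C t := fun t u w h hw =>
    Relation.ReflTransGen.head h hw
  have Cout : ∀ t u w, x t (u, w) ≠ 0 → u ∈ C t → w ∈ C t := fun t =>
    aux_euler (x t) (xnn t) (hcons t) (C t) (Cin t)
  have Cpath : ∀ t u w, Relation.ReflTransGen (fun a b => x t (a, b) ≠ 0) u w → u ∈ C t →
      w ∈ C t := by
    intro t u w h hu
    induction h with
    | refl => exact hu
    | tail _ hbc ih => exact Cout t _ _ hbc ih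
  have ra := fun t => alpha_reach (x t) (α t) (pα t) (pa1 t) (pa2 t)
  have rb := fun t => beta_reach (x t) (β t) (pβ t) (pb1 t) (pb2 t)
  have γx : ∀ t u w, γ t (u, w) ≠ 0 →
      Relation.ReflTransGen (fun a b => x t (a, b) ≠ 0) u w := by
    intro t u w h
    have hE : (u, w) ∈ Ered (m := m) := by
      by_contra hE; exact h (fγ0 t _ hE)
    have e := aux_bin_ne (fγ t _) h
    rcases hE with ⟨i, j, e' | e'⟩ | hE
    · rw [Prod.mk.injEq] at e'
      obtain ⟨rfl, rfl⟩ := e'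
      have h1 := fa1 t i j
      have h2 := fa2 t i j
      rw [e] at h1 h2
      exact (ra t i j _ (Fin.last _) rfl (by linarith)).1.tail (by linarith)
    · rw [Prod.mk.injEq] at e'
      obtain ⟨rfl, rfl⟩ := e'
      have h1 := fb1 t i j
      have h2 := fb2 t i j
      rw [e] at h1 h2
      exact (rb t i j (m i j) 0 (by simp) (by linarith)).1.tail (by linarith)
    · apply Relation.ReflTransGen.single
      rw [fc t _ hE]; exact h
  have artC : ∀ t i j w, x t (art i j, w) ≠ 0 → art i j ∈ C t := by
    intro t i j w h
    by_cases hs0 : (art i j : WV n q m) = s0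
    · rw [hs0]; exact Relation.ReflTransGen.refl
    have hE : (art i j, w) ∈ Etilde (m := m) := by
      by_contra hE; exact h (fx0 t _ hE)
    have hI : (art i j : WV n q m) ∈ VI (m := m) := ⟨(i, j), rfl⟩
    have hy := fxy t _ w hI hs0 hE
    rw [aux_bin_ne (fx t _) h] at hy
    have hr := aux_flow_reach (σ t (art i j)) (fun a => by
        by_cases ha : a ∈ Ered (m := m)
        · exact (s4 t _ a hI ha).1
        · rw [s5 t _ a ha]) (art i j) s0
      (by rw [← eout _ (s5 t _), ← ein _ (s5 t _), s1 t _ hI]; linarith)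
      (fun u hus huv => by
        by_cases hu : u ∈ VI (m := m)
        · rw [← eout _ (s5 t _), ← ein _ (s5 t _), s2 t _ u hI hu hus huv]
        · have hz1 : ∀ w, (u, w) ∉ Ered (m := m) := by
            rintro w (⟨i, j, e | e⟩ | ⟨i, i', j, _, e | e⟩) <;>
              exact hu ⟨_, (congrArg Prod.fst e).symm⟩
          have hz2 : ∀ w, (w, u) ∉ Ered (m := m) := by
            rintro w (⟨i, j, e | e⟩ | ⟨i, i', j, _, e | e⟩) <;>
              exact hu ⟨_, (congrArg Prod.snd e).symm⟩
          simp [fun w => s5 t (art i j) _ (hz1 w), fun w => s5 t (art i j) _ (hz2 w)])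
    show Relation.ReflTransGen _ _ _
    refine aux_lift _ _ (fun a c hac => γx t a c ?_) _ _ hr
    have hE : (a, c) ∈ Ered (m := m) := by
      by_contra hE; exact hac (s5 t _ _ hE)
    have := s4 t _ _ hI hE
    intro h0
    apply hac
    rw [h0] at this
    exact le_antisymm this.2 this.1
  have x'eq : ∀ t v w, (if w ∈ C t then x t (w, v) else 0) = if v ∈ C t then x t (w, v) else 0 := by
    intro t v w
    by_cases h : x t (w, v) = 0
    · simp [h]
    · have : w ∈ C t ↔ v ∈ C t := ⟨Cout t _ _ h, Cin t _ _ h⟩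
      simp [this]
  have x'0 : ∀ t a, a ∉ Etilde (m := m) → (if a.1 ∈ C t then x t a else 0) = 0 := by
    intro t a ha
    simp [fx0 t a ha]
  have x'out : ∀ t v, v ∈ C t →
      ssum (dplus (m := m) {v}) (fun a => if a.1 ∈ C t then x t a else 0) =
        ssum (dplus (m := m) {v}) (x t) := by
    intro t v hv
    rw [dout _ (x'0 t), dout _ (fx0 t)]
    simp [hv]
  refine ⟨fun t a => if a.1 ∈ C t then x t a else 0, fun t v => if v ∈ C t then 1 else 0,
    ⟨?_, ?_, fz, x'0, ?_, ?_, ?_, ?_, ?_, fz1, fB⟩, ?_⟩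
  · intro t a
    dsimp only
    split_ifs
    · exact fx t a
    · simp
  · intro t v
    dsimp only
    split_ifs <;> simp
  · intro t
    rw [x'out t s0 Relation.ReflTransGen.refl]; exact fs t
  · intro t o u hu
    by_cases hz : z o t = 0
    · rw [hz]
      refine Finset.sum_nonneg fun a _ => Set.indicator_nonneg (fun a _ => ?_) a
      dsimp only
      split_ifs
      · exact xnn t a
      · exact le_rfl
    · have huC : u ∈ C t := by
        obtain ⟨⟨i, j, k⟩, rfl⟩ := hL o hu
        have h1 := pz t o _ hu
        rw [aux_bin_ne (fz o t) hz] at h1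
        by_cases ha : α t (pk i j k) = 0
        · have hb : β t (pk i j k) ≠ 0 := by
            intro hb
            have h1 : 1 ≤ α t (pk i j k) + β t (pk i j k) := h1
            rw [ha, hb] at h1; norm_num at h1
          obtain ⟨r1, r2⟩ := rb t i j (m i j - k) k (by have := k.isLt; omega) hb
          exact Cpath t _ _ r1 (artC t _ _ _ r2)
        · obtain ⟨r1, r2⟩ := ra t i j k k rfl ha
          exact Cpath t _ _ r1 (artC t _ _ _ r2)
      rw [x'out t u huC]; exact fL t o u hu
  · intro t u v _ _
    dsimp only
    split_ifs
    · rcases aux_bin (fx t (u, v)) with h | h <;> rw [h]; norm_num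
    · exact le_rfl
  · intro t S hS _ u0 hu0
    dsimp only
    have nn : ∀ a, 0 ≤ (fun a : WV n q m × WV n q m => if a.1 ∈ C t then x t a else 0) a := by
      intro a
      dsimp only
      split_ifs
      · exact xnn t a
      · exact le_rfl
    split_ifs with hC
    · obtain ⟨a, c, hac, ha, hc, hr⟩ := aux_exit _ _ _ S hC hu0 hS
      have hE : (a, c) ∈ Etilde (m := m) := by
        by_contra hE; exact hac (fx0 t _ hE)
      refine aux_ssum_ge _ _ nn (a, c) ⟨hE, ha, hc⟩ ?_
      have : a ∈ C t := hr
      simp only [this, if_true]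
      exact aux_bin_ne (fx t _) hac
    · exact Finset.sum_nonneg fun a _ => Set.indicator_nonneg (fun a _ => nn a) a
  · intro t v
    rw [dout _ (x'0 t), din _ (x'0 t)]
    simp only [x'eq]
    by_cases hv : v ∈ C t
    · simp only [hv, if_true, hcons]
    · simp [hv]
  · unfold obj
    refine Finset.sum_le_sum fun t _ => Finset.sum_le_sum fun a _ => ?_
    by_cases ha : a ∈ Etilde (m := m)
    · simp only [Set.indicator_of_mem ha]
      have := (hdpos a ha).le
      split_ifs
      · exact le_rfl
      · rw [mul_zero]; exact mul_nonneg this (xnn t a)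
    · simp only [Set.indicator_of_notMem ha, le_refl]

def auxA (x : WV n q m × WV n q m → ℝ) (i : Fin n) (j : Fin q) (k : Fin (m i j + 1)) : Prop :=
  ∀ k' : Fin (m i j + 1), k' ≤ k → x (nb i j k', pk i j k') ≠ 0

def auxB (x : WV n q m × WV n q m → ℝ) (i : Fin n) (j : Fin q) (k : Fin (m i j + 1)) : Prop :=
  ∀ k' : Fin (m i j + 1), k ≤ k' → x (sb i j k', pk i j k') ≠ 0

def auxG (x : WV n q m × WV n q m → ℝ) (u w : WV n q m) : Prop :=
  ((u, w) ∈ crossArcs (m := m) ∧ x (u, w) ≠ 0) ∨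
  ∃ i j, (u = art i (Fin.castSucc j) ∧ w = art i (Fin.succ j) ∧ auxA x i j (Fin.last _) ∧
      x (pk i j (Fin.last _), art i (Fin.succ j)) ≠ 0) ∨
    (u = art i (Fin.succ j) ∧ w = art i (Fin.castSucc j) ∧ auxB x i j 0 ∧
      x (pk i j 0, art i (Fin.castSucc j)) ≠ 0)

def auxQ (x : WV n q m × WV n q m → ℝ) (v0 w : WV n q m) : Prop :=
  (∀ i j, w = art i j → Relation.ReflTransGen (auxG x) v0 (art i j)) ∧
  (∀ i j k, w = pk i j k →
    (Relation.ReflTransGen (auxG x) v0 (art i j.castSucc) ∧ auxA x i j k) ∨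
    (Relation.ReflTransGen (auxG x) v0 (art i j.succ) ∧ auxB x i j k))

theorem auxQ_art (x : WV n q m × WV n q m → ℝ) (v0 : WV n q m) (i : Fin n) (j : Fin (q + 1)) :
    auxQ x v0 (art i j) ↔ Relation.ReflTransGen (auxG x) v0 (art i j) := by
  constructor
  · intro h; exact h.1 i j rfl
  · intro h
    refine ⟨fun i' j' e => e ▸ h, fun i' j' k e => ?_⟩
    simp [art, pk] at e

theorem auxQ_pk (x : WV n q m × WV n q m → ℝ) (v0 : WV n q m) (i : Fin n) (j : Fin q)
    (k : Fin (m i j + 1)) : auxQ x v0 (pk i j k) ↔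
    (Relation.ReflTransGen (auxG x) v0 (art i j.castSucc) ∧ auxA x i j k) ∨
    (Relation.ReflTransGen (auxG x) v0 (art i j.succ) ∧ auxB x i j k) := by
  constructor
  · intro h; exact h.2 i j k rfl
  · intro h
    refine ⟨fun i' j' e => ?_, fun i' j' k' e => ?_⟩
    · simp [art, pk] at e
    · simp only [pk, Sum.inr.injEq] at e
      cases e
      exact h

theorem auxQ_step (x : WV n q m × WV n q m → ℝ) (hx : ∀ a, a ∉ Etilde (m := m) → x a = 0)
    (v0 u w : WV n q m) (hu : auxQ x v0 u) (h : x (u, w) ≠ 0) : auxQ x v0 w := by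
  have hE : (u, w) ∈ Etilde (m := m) := by
    by_contra hE; exact h (hx _ hE)
  rcases hE with ⟨i, j, k, e | e | e | e⟩ | hE
  · rw [Prod.mk.injEq] at e
    obtain ⟨rfl, rfl⟩ := e
    rw [auxQ_pk]
    rcases nb_cases i j k with hk | ⟨k', hk⟩
    · rw [nb_zero i j k hk, auxQ_art] at hu
      refine Or.inl ⟨hu, fun k' hk' => ?_⟩
      have : k' = k := by ext; have := Fin.le_def.1 hk'; omega
      rw [this]; exact h
    · rw [nb_succ i j k k' hk, auxQ_pk] at hu
      rcases hu with ⟨h1, h2⟩ | ⟨h1, h2⟩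
      · refine Or.inl ⟨h1, fun k2 hk2 => ?_⟩
        by_cases e : k2 = k
        · rw [e]; exact h
        · refine h2 k2 ?_
          have := Fin.le_def.1 hk2
          have : (k2 : ℕ) ≠ k := fun h => e (Fin.ext h)
          rw [Fin.le_def]; omega
      · refine Or.inr ⟨h1, fun k2 hk2 => h2 k2 ?_⟩
        have := Fin.le_def.1 hk2
        rw [Fin.le_def]; omega
  · rw [Prod.mk.injEq] at e
    obtain ⟨rfl, rfl⟩ := e
    rw [auxQ_pk] at hu
    rcases nb_cases i j k with hk | ⟨k', hk⟩
    · rw [nb_zero i j k hk] at h ⊢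
      have hk0 : k = 0 := by ext; simpa using hk
      subst hk0
      rw [auxQ_art]
      rcases hu with ⟨h1, h2⟩ | ⟨h1, h2⟩
      · exact h1
      · exact h1.tail (Or.inr ⟨i, j, Or.inr ⟨rfl, rfl, h2, h⟩⟩)
    · rw [nb_succ i j k k' hk] at h ⊢
      rw [auxQ_pk]
      rcases hu with ⟨h1, h2⟩ | ⟨h1, h2⟩
      · refine Or.inl ⟨h1, fun k2 hk2 => h2 k2 ?_⟩
        have := Fin.le_def.1 hk2
        rw [Fin.le_def]; omega
      · refine Or.inr ⟨h1, fun k2 hk2 => ?_⟩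
        by_cases e : k2 = k'
        · rw [e, sb_succ i j k' k hk]; exact h
        · refine h2 k2 ?_
          have := Fin.le_def.1 hk2
          have : (k2 : ℕ) ≠ k' := fun h => e (Fin.ext h)
          rw [Fin.le_def]; omega
  · rw [Prod.mk.injEq] at e
    obtain ⟨rfl, rfl⟩ := e
    rw [auxQ_pk]
    rcases sb_cases i j k with hk | ⟨k', hk⟩
    · rw [sb_last i j k hk, auxQ_art] at hu
      refine Or.inr ⟨hu, fun k' hk' => ?_⟩
      have : k' = k := by ext; have := Fin.le_def.1 hk'; have := k'.isLt; omega
      rw [this]; exact h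
    · rw [sb_succ i j k k' hk, auxQ_pk] at hu
      rcases hu with ⟨h1, h2⟩ | ⟨h1, h2⟩
      · refine Or.inl ⟨h1, fun k2 hk2 => h2 k2 ?_⟩
        have := Fin.le_def.1 hk2
        rw [Fin.le_def]; omega
      · refine Or.inr ⟨h1, fun k2 hk2 => ?_⟩
        by_cases e : k2 = k
        · rw [e]; exact h
        · refine h2 k2 ?_
          have := Fin.le_def.1 hk2
          have : (k2 : ℕ) ≠ k := fun h => e (Fin.ext h)
          rw [Fin.le_def]; omega
  · rw [Prod.mk.injEq] at e
    obtain ⟨rfl, rfl⟩ := e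
    rw [auxQ_pk] at hu
    rcases sb_cases i j k with hk | ⟨k', hk⟩
    · rw [sb_last i j k hk] at h ⊢
      have hk0 : k = Fin.last _ := by ext; simpa using hk
      subst hk0
      rw [auxQ_art]
      rcases hu with ⟨h1, h2⟩ | ⟨h1, h2⟩
      · exact h1.tail (Or.inr ⟨i, j, Or.inl ⟨rfl, rfl, h2, h⟩⟩)
      · exact h1
    · rw [sb_succ i j k k' hk] at h ⊢
      rw [auxQ_pk]
      rcases hu with ⟨h1, h2⟩ | ⟨h1, h2⟩
      · refine Or.inl ⟨h1, fun k2 hk2 => ?_⟩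
        by_cases e : k2 = k'
        · rw [e, nb_succ i j k' k hk]; exact h
        · refine h2 k2 ?_
          have := Fin.le_def.1 hk2
          have : (k2 : ℕ) ≠ k' := fun h => e (Fin.ext h)
          rw [Fin.le_def]; omega
      · refine Or.inr ⟨h1, fun k2 hk2 => h2 k2 ?_⟩
        have := Fin.le_def.1 hk2
        rw [Fin.le_def]; omega
  · have hE' := hE
    obtain ⟨i, i', j, _, e | e⟩ := hE
    · rw [Prod.mk.injEq] at e
      obtain ⟨rfl, rfl⟩ := e
      rw [auxQ_art] at hu ⊢
      exact hu.tail (Or.inl ⟨hE', h⟩)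
    · rw [Prod.mk.injEq] at e
      obtain ⟨rfl, rfl⟩ := e
      rw [auxQ_art] at hu ⊢
      exact hu.tail (Or.inl ⟨hE', h⟩)

theorem auxQ_reach (x : WV n q m × WV n q m → ℝ) (hx : ∀ a, a ∉ Etilde (m := m) → x a = 0)
    (i : Fin n) (j : Fin (q + 1)) (w : WV n q m)
    (h : Relation.ReflTransGen (fun a b => x (a, b) ≠ 0) (art i j) w) :
    auxQ x (art i j) w := by
  induction h with
  | refl => rw [auxQ_art]
  | tail _ hbc ih => exact auxQ_step x hx _ _ _ ih hbc

theorem cross_not_sub (i : Fin n) (j j' : Fin (q + 1)) (h : j ≠ j') :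
    ((art i j, art i j') : WV n q m × WV n q m) ∉ crossArcs (m := m) := by
  rintro ⟨i1, i2, j1, _, e | e⟩ <;>
  · rw [Prod.mk.injEq] at e
    exact h ((art_inj _ _ _ _ e.1).2.trans (art_inj _ _ _ _ e.2).2.symm)

theorem auxG_ered (x : WV n q m × WV n q m → ℝ) (u w : WV n q m) (h : auxG x u w) :
    (u, w) ∈ Ered (m := m) := by
  rcases h with h | ⟨i, j, ⟨rfl, rfl, _⟩ | ⟨rfl, rfl, _⟩⟩
  · exact Or.inr h.1
  · exact Or.inl ⟨i, j, Or.inl rfl⟩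
  · exact Or.inl ⟨i, j, Or.inr rfl⟩

theorem auxG_cross (x : WV n q m × WV n q m → ℝ) (u w : WV n q m)
    (h : (u, w) ∈ crossArcs (m := m)) : auxG x u w ↔ x (u, w) ≠ 0 := by
  refine ⟨?_, fun h' => Or.inl ⟨h, h'⟩⟩
  rintro (h' | ⟨i, j, ⟨rfl, rfl, _⟩ | ⟨rfl, rfl, _⟩⟩)
  · exact h'.2
  · exact absurd h (cross_not_sub _ _ _ (Fin_cs_ne j))
  · exact absurd h (cross_not_sub _ _ _ (Fin_cs_ne j).symm)

theorem auxG_down (x : WV n q m × WV n q m → ℝ) (i : Fin n) (j : Fin q)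
    (h : auxG x (art i j.castSucc) (art i j.succ)) :
    auxA x i j (Fin.last _) ∧ x (pk i j (Fin.last _), art i j.succ) ≠ 0 := by
  rcases h with h | ⟨i', j', ⟨e1, e2, h3⟩ | ⟨e1, e2, h3⟩⟩
  · exact absurd h.1 (cross_not_sub _ _ _ (Fin_cs_ne j))
  · obtain ⟨rfl, _⟩ := art_inj _ _ _ _ e1
    have := Fin.succ_injective _ (art_inj _ _ _ _ e2).2
    subst this
    exact h3
  · have h1 := congrArg Fin.val (art_inj _ _ _ _ e1).2
    have h2 := congrArg Fin.val (art_inj _ _ _ _ e2).2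
    simp at h1 h2
    omega

theorem auxG_up (x : WV n q m × WV n q m → ℝ) (i : Fin n) (j : Fin q)
    (h : auxG x (art i j.succ) (art i j.castSucc)) :
    auxB x i j 0 ∧ x (pk i j 0, art i j.castSucc) ≠ 0 := by
  rcases h with h | ⟨i', j', ⟨e1, e2, h3⟩ | ⟨e1, e2, h3⟩⟩
  · exact absurd h.1 (cross_not_sub _ _ _ (Fin_cs_ne j).symm)
  · have h1 := congrArg Fin.val (art_inj _ _ _ _ e1).2
    have h2 := congrArg Fin.val (art_inj _ _ _ _ e2).2
    simp at h1 h2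
    omega
  · obtain ⟨rfl, _⟩ := art_inj _ _ _ _ e1
    have := Fin.succ_injective _ (art_inj _ _ _ _ e1).2
    subst this
    exact h3

theorem basic_to_F (i0 : Fin n) (j0 : Fin (q + 1))
    (L : O → Set (WV n q m)) (hL : ∀ o, L o ⊆ VL) (b : O → ℝ) (B : ℝ) (x y z)
    (hf : Pbasic T ({0, 1} : Set ℝ) (art i0 j0) L b B x y z) :
    ∃ y' α β γ σ, Pf T ({0, 1} : Set ℝ) (art i0 j0) L b B x y' z α β γ σ ∧
      Psub T ({0, 1} : Set ℝ) L x z α β := by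
  classical
  obtain ⟨fx, fy, fz, fx0, fs, fL, fxy, fcut, fcons, fz1, fB⟩ := hf
  have hcons : ∀ t v, ∑ w, x t (v, w) = ∑ w, x t (w, v) := fun t v => by
    rw [← dout (x t) (fx0 t), ← din (x t) (fx0 t)]; exact fcons t v
  have xnn : ∀ t a, 0 ≤ x t a := fun t a => aux_bin_nn (fx t a)
  set s0 : WV n q m := art i0 j0 with hs0
  have ite_bin : ∀ (p : Prop) [Decidable p], (if p then (1 : ℝ) else 0) ∈ ({0, 1} : Set ℝ) := by
    intro p _; split_ifs <;> simp
  have le_of : ∀ (p : Prop) [Decidable p] (r : ℝ), 0 ≤ r → (p → 1 ≤ r) →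
      (if p then (1 : ℝ) else 0) ≤ r := by
    intro p _ r h0 h1; split_ifs with h
    · exact h1 h
    · exact h0
  have x1 : ∀ t a, x t a ≠ 0 → 1 ≤ x t a := fun t a h => (aux_bin_ne (fx t a) h).ge
  have toS : ∀ t v w, x t (v, w) ≠ 0 →
      Relation.ReflTransGen (fun a b => x t (a, b) ≠ 0) v s0 := by
    intro t v w h
    by_contra hc
    have hvs : v ≠ s0 := by rintro rfl; exact hc Relation.ReflTransGen.refl
    have hE : (v, w) ∈ Etilde (m := m) := by
      by_contra hE; exact h (fx0 t _ hE)
    have hvw : v ≠ w := by rintro rfl; exact Etilde_noloop _ hE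
    let S : Set (WV n q m) := {u | Relation.ReflTransGen (fun a b => x t (a, b) ≠ 0) v u}
    have hvS : v ∈ S := Relation.ReflTransGen.refl
    have hwS : w ∈ S := Relation.ReflTransGen.single h
    have hcard : 2 ≤ S.ncard := by
      rw [← Set.ncard_pair hvw]
      exact Set.ncard_le_ncard (by rintro a (rfl | rfl) <;> assumption) (Set.toFinite _)
    have h1 := fcut t S hc hcard v hvS
    have h2 := fxy t v w hvs hE
    have h3 := x1 t _ h
    obtain ⟨a, ha, hne⟩ := aux_exists_of_ssum _ _ (h3.trans (h2.trans h1))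
    exact ha.2.2 (Relation.ReflTransGen.tail ha.2.1 hne)
  have fromS : ∀ t v w, x t (v, w) ≠ 0 →
      Relation.ReflTransGen (fun a b => x t (a, b) ≠ 0) s0 v := by
    intro t v w h
    have hcl := aux_euler' (x t) (xnn t) (hcons t)
      {u | Relation.ReflTransGen (fun a b => x t (a, b) ≠ 0) s0 u}
      (fun u w h hu => Relation.ReflTransGen.tail hu h)
    have hr := toS t v w h
    clear h
    induction hr using Relation.ReflTransGen.head_induction_on with
    | refl => exact Relation.ReflTransGen.refl
    | head hac _ ih => exact hcl _ _ hac ih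
  have hsig : ∀ t v0, ∃ g : WV n q m × WV n q m → ℝ,
      (∀ a, 0 ≤ g a ∧ g a ≤ if auxG (x t) a.1 a.2 then 1 else 0) ∧
      (∀ u, ∑ w, g (u, w) - ∑ w, g (w, u) =
        (if v0 ≠ s0 ∧ v0 ∈ VI (m := m) ∧ ∃ w, x t (v0, w) ≠ 0 then (1 : ℝ) else 0) *
        ((if u = v0 then 1 else 0) - (if u = s0 then 1 else 0))) ∧
      (v0 ∉ VI (m := m) → ∀ a, g a = 0) := by
    intro t v0
    by_cases h : v0 ≠ s0 ∧ v0 ∈ VI (m := m) ∧ ∃ w, x t (v0, w) ≠ 0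
    · obtain ⟨h1, ⟨⟨i, j⟩, h2⟩, w, h3⟩ := id h
      have h2 : art i j = v0 := h2
      have hr := toS t v0 w h3
      rw [← h2] at hr
      have hq := auxQ_reach (x t) (fx0 t) i j s0 hr
      rw [hs0, auxQ_art, h2, ← hs0] at hq
      obtain ⟨g, g1, g2, g3⟩ := aux_reach_flow _ _ _ hq
      refine ⟨g, fun a => ⟨(g1 a).1, ?_⟩, fun u => ?_, fun hn => absurd h.2.1 hn⟩
      · split_ifs with hG
        · exact (g1 a).2
        · by_contra hlt
          exact hG (g2 a (by intro h0; exact hlt h0.le))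
      · rw [if_pos h, one_mul]; exact g3 u
    · refine ⟨fun _ => 0, fun a => ⟨le_rfl, ?_⟩, fun u => ?_, fun _ _ => rfl⟩
      · split_ifs <;> norm_num
      · rw [if_neg h]; simp
  choose σ σ1 σ2 σ3 using hsig
  have σ0 : ∀ t v0 a, a ∉ Ered (m := m) → σ t v0 a = 0 := by
    intro t v0 a ha
    have := σ1 t v0 a
    rw [if_neg (fun h => ha (auxG_ered _ _ _ h))] at this
    exact le_antisymm this.2 this.1
  refine ⟨fun t v => if v ≠ s0 ∧ v ∈ VI (m := m) ∧ ∃ w, x t (v, w) ≠ 0 then 1 else 0,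
    fun t v => Sum.elim (fun _ => 0) (fun p => if auxA (x t) p.1 p.2.1 p.2.2 then 1 else 0) v,
    fun t v => Sum.elim (fun _ => 0) (fun p => if auxB (x t) p.1 p.2.1 p.2.2 then 1 else 0) v,
    fun t a => if auxG (x t) a.1 a.2 then 1 else 0, σ,
    ⟨fx, fun t v => ite_bin _, fz, fun t a => ite_bin _, fx0, ?_, fs, fL, ?_, ?_, ?_, ?_, ?_, ?_,
      fcons, fz1, fB, ?_, ?_, ?_, fun t v0 a _ _ => σ1 t v0 a, σ0,
      fun t v0 a h => σ3 t v0 h a⟩, ?_, ?_, ?_, ?_, ?_, ?_, ?_⟩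
  · intro t a ha
    exact if_neg fun h => ha (auxG_ered _ _ _ h)
  · intro t u v hu hne _
    dsimp only
    by_cases h : x t (u, v) = 0
    · rw [h]; exact aux_bin_nn (ite_bin _)
    · rw [if_pos ⟨hne, hu, v, h⟩, aux_bin_ne (fx t _) h]
  · rintro t ⟨u, w⟩ ha
    dsimp only
    by_cases h : x t (u, w) = 0
    · rw [if_neg, h]
      rw [auxG_cross _ _ _ ha]; simpa using h
    · rw [if_pos ((auxG_cross _ _ _ ha).2 h), aux_bin_ne (fx t _) h]
  · intro t i j
    refine le_of _ _ (aux_bin_nn (ite_bin _)) fun h => ?_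
    exact (if_pos (auxG_down _ _ _ h).1).ge
  · intro t i j
    exact le_of _ _ (xnn t _) fun h => x1 t _ (auxG_down _ _ _ h).2
  · intro t i j
    refine le_of _ _ (aux_bin_nn (ite_bin _)) fun h => ?_
    exact (if_pos (auxG_up _ _ _ h).1).ge
  · intro t i j
    exact le_of _ _ (xnn t _) fun h => x1 t _ (auxG_up _ _ _ h).2
  · intro t v0 _
    rw [eout _ (σ0 t v0), ein _ (σ0 t v0), σ2]
    by_cases h : v0 = s0
    · simp [h]
    · simp [h]
  · intro t v0 u _ _ h1 h2
    rw [eout _ (σ0 t v0), ein _ (σ0 t v0), σ2]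
    simp [h1, h2]
  · intro t v0 _
    rw [eout _ (σ0 t v0), ein _ (σ0 t v0), σ2]
    by_cases h : v0 = s0
    · simp [h]
    · have h' : s0 ≠ v0 := fun e => h e.symm
      simp [h, h']
  · rintro t (p | p)
    · simp
    · exact ite_bin _
  · rintro t (p | p)
    · simp
    · exact ite_bin _
  · intro t i j k hk
    obtain ⟨k', hk'⟩ := (sb_cases i j k).resolve_left hk
    rw [sb_succ i j k k' hk']
    refine le_of _ _ (aux_bin_nn (ite_bin _)) fun h => ?_
    have : auxA (x t) i j k := fun k2 h2 => h k2 (by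
      have := Fin.le_def.1 h2
      change k2 ≤ k'
      rw [Fin.le_def]; omega)
    exact (if_pos this).ge
  · intro t i j k
    exact le_of _ _ (xnn t _) fun h => x1 t _ (h k le_rfl)
  · intro t i j k hk
    obtain ⟨k', hk'⟩ := (nb_cases i j k).resolve_left hk
    rw [nb_succ i j k k' hk']
    refine le_of _ _ (aux_bin_nn (ite_bin _)) fun h => ?_
    have : auxB (x t) i j k := fun k2 h2 => h k2 (by
      have := Fin.le_def.1 h2
      change k' ≤ k2
      rw [Fin.le_def]; omega)
    exact (if_pos this).ge
  · intro t i j k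
    exact le_of _ _ (xnn t _) fun h => x1 t _ (h k le_rfl)
  · intro t o v hv
    obtain ⟨⟨i, j, k⟩, rfl⟩ := hL o hv
    dsimp only [Sum.elim_inr]
    by_cases hz : z o t = 0
    · rw [hz]
      exact add_nonneg (aux_bin_nn (ite_bin _)) (aux_bin_nn (ite_bin _))
    · rw [aux_bin_ne (fz o t) hz]
      have h1 := fL t o _ hv
      rw [aux_bin_ne (fz o t) hz] at h1
      obtain ⟨⟨a, c⟩, ha, hne⟩ := aux_exists_of_ssum _ _ h1
      have e : a = pk i j k := ha.2.1
      subst e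
      have hq := auxQ_reach (x t) (fx0 t) i0 j0 _ (fromS t _ _ hne)
      rw [auxQ_pk] at hq
      rcases hq with ⟨_, h2⟩ | ⟨_, h2⟩
      · rw [if_pos h2]
        linarith [aux_bin_nn (ite_bin (auxB (x t) i j k))]
      · rw [if_pos h2]
        linarith [aux_bin_nn (ite_bin (auxA (x t) i j k))]

theorem obj_nonneg (d : WV n q m → WV n q m → ℝ)
    (hdpos : ∀ a ∈ Etilde (m := m), 0 < d a.1 a.2)
    (x : Fin T → WV n q m × WV n q m → ℝ) (hx : ∀ t a, x t a ∈ ({0, 1} : Set ℝ)) :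
    0 ≤ obj T d x := by
  unfold obj ssum
  refine Finset.sum_nonneg fun t _ => Finset.sum_nonneg fun a _ =>
    Set.indicator_nonneg (fun a ha => mul_nonneg (hdpos a ha).le (aux_bin_nn (hx t a))) a

/-- Theorem 3 (first part): the compact multicommodity-flow formulation
`P_F = P_f ∩ P_sub` has the same optimal objective value as the basic
formulation `P_basic` of the joint order batching and picker routing problem:
`min { f(x) : (x,y,z,α,β,γ,σ) ∈ P_F } = min { f(x) : (x,y,z) ∈ P_basic }`.
The warehouse has `n + 1` picking aisles and `q + 1` blocks, the origin is the
top-left artificial location, `d` is the (symmetric, positive) arc length,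
each order `o` has size `b o > 0` and set of picking locations `L o ⊆ V_L`,
and each of the `T` pickers has capacity `B`. -/
theorem PF_eq_Pbasic
    {n q : ℕ} {m : Fin (n + 1) → Fin (q + 1) → ℕ}
    (T : ℕ) (O : Type) [Fintype O]
    (L : O → Set (WV (n + 1) (q + 1) m)) (hL : ∀ o, L o ⊆ VL)
    (b : O → ℝ) (hb : ∀ o, 0 < b o) (B : ℝ)
    (d : WV (n + 1) (q + 1) m → WV (n + 1) (q + 1) m → ℝ)
    (hdpos : ∀ a ∈ Etilde (m := m), 0 < d a.1 a.2)
    (hdsymm : ∀ u v, d u v = d v u) :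
    sInf { r : ℝ | ∃ x y z α β γ σ,
        Pf T ({0, 1} : Set ℝ) (art 0 0) L b B x y z α β γ σ ∧
        Psub T ({0, 1} : Set ℝ) L x z α β ∧ r = obj T d x } =
    sInf { r : ℝ | ∃ x y z,
        Pbasic T ({0, 1} : Set ℝ) (art 0 0) L b B x y z ∧ r = obj T d x } := by
  have hsub : { r : ℝ | ∃ x y z,
        Pbasic T ({0, 1} : Set ℝ) (art 0 0) L b B x y z ∧ r = obj T d x } ⊆
      { r : ℝ | ∃ x y z α β γ σ,
        Pf T ({0, 1} : Set ℝ) (art 0 0) L b B x y z α β γ σ ∧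
        Psub T ({0, 1} : Set ℝ) L x z α β ∧ r = obj T d x } := by
    rintro r ⟨x, y, z, h, rfl⟩
    obtain ⟨y', α, β, γ, σ, h1, h2⟩ := basic_to_F T 0 0 L hL b B x y z h
    exact ⟨x, y', z, α, β, γ, σ, h1, h2, rfl⟩
  have hdom : ∀ r ∈ { r : ℝ | ∃ x y z α β γ σ,
        Pf T ({0, 1} : Set ℝ) (art 0 0) L b B x y z α β γ σ ∧
        Psub T ({0, 1} : Set ℝ) L x z α β ∧ r = obj T d x },
      ∃ r' ∈ { r : ℝ | ∃ x y z,
        Pbasic T ({0, 1} : Set ℝ) (art 0 0) L b B x y z ∧ r = obj T d x }, r' ≤ r := by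
    rintro r ⟨x, y, z, α, β, γ, σ, h1, h2, rfl⟩
    obtain ⟨x', y', h, hle⟩ := F_to_basic T _ L hL b B d hdpos x y z α β γ σ h1 h2
    exact ⟨_, ⟨x', y', z, h, rfl⟩, hle⟩
  have hbdd : BddBelow { r : ℝ | ∃ x y z α β γ σ,
        Pf T ({0, 1} : Set ℝ) (art 0 0) L b B x y z α β γ σ ∧
        Psub T ({0, 1} : Set ℝ) L x z α β ∧ r = obj T d x } := by
    refine ⟨0, ?_⟩
    rintro r ⟨x, y, z, α, β, γ, σ, h1, h2, rfl⟩
    exact obj_nonneg T d hdpos x h1.1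
  generalize { r : ℝ | ∃ x y z α β γ σ,
        Pf T ({0, 1} : Set ℝ) (art 0 0) L b B x y z α β γ σ ∧
        Psub T ({0, 1} : Set ℝ) L x z α β ∧ r = obj T d x } = F at *
  generalize { r : ℝ | ∃ x y z,
        Pbasic T ({0, 1} : Set ℝ) (art 0 0) L b B x y z ∧ r = obj T d x } = P at *
  rcases Set.eq_empty_or_nonempty F with hF | hF
  · rw [hF] at hsub ⊢
    rw [Set.subset_empty_iff.1 hsub]
  · obtain ⟨r, hr⟩ := hF
    obtain ⟨r', hr', _⟩ := hdom r hr
    refine le_antisymm (csInf_le_csInf hbdd ⟨r', hr'⟩ hsub) (le_csInf ⟨r, hr⟩ fun a ha => ?_)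
    obtain ⟨a', ha', hle⟩ := hdom a ha
    exact (csInf_le (hbdd.mono hsub) ha').trans hle

end Formulations

end JOBPRP
end

section
/- In a single-block warehouse graph, for any required set V_R of picking vertices, every optimal tour (a tour visiting all vertices of V_R of minimum length among such tours) traverses each aisle at most once; that is, for each aisle i, the optimal tour contains at most one contiguous occurrence of the full subpath u_i v_{i1} … v_{i s_i} d_i or its reverse. -/
namespace SingleBlock

/-- Vertices of a single-block warehouse with `n` aisles, where aisle `i`
contains `sz i + 1` picking vertices: `Sum.inl (Sum.inl i)` is the artificial
vertex `u i` on the top cross-aisle, `Sum.inl (Sum.inr i)` is the artificial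
vertex `d i` on the bottom cross-aisle, and `Sum.inr ⟨i, k⟩` is the picking
vertex `v i k` (numbered from north to south). -/
abbrev SBV (n : ℕ) (sz : Fin n → ℕ) : Type :=
  (Fin n ⊕ Fin n) ⊕ ((i : Fin n) × Fin (sz i + 1))

variable {n : ℕ} {sz : Fin n → ℕ}

/-- the artificial vertex `u i` on the top cross-aisle -/
def top (i : Fin n) : SBV n sz := Sum.inl (Sum.inl i)

/-- the artificial vertex `d i` on the bottom cross-aisle -/
def bot (i : Fin n) : SBV n sz := Sum.inl (Sum.inr i)

/-- the picking vertex `v i k` -/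
def pk (i : Fin n) (k : Fin (sz i + 1)) : SBV n sz := Sum.inr ⟨i, k⟩

/-- `v` is a picking vertex -/
def IsPick (v : SBV n sz) : Prop := ∃ i k, v = pk i k

/-- the aisle path `u_i — v_{i1} — ⋯ — v_{i s_i} — d_i` of aisle `i`,
as a list of vertices from north to south -/
def aislePath (i : Fin n) : List (SBV n sz) :=
  top i :: ((List.ofFn fun k : Fin (sz i + 1) => pk i k) ++ [bot i])

/-- `x` and `y` occur consecutively (in this order) in the list `l` -/
def adjIn {α : Type*} (l : List α) (x y : α) : Prop :=
  ∃ p : ℕ, l[p]? = some x ∧ l[p + 1]? = some y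

/-- adjacency in the single-block warehouse graph: neighboring artificial
vertices along the two cross-aisles, and consecutive vertices along each aisle
path -/
def Adj (x y : SBV n sz) : Prop :=
  (∃ i j : Fin n, (j : ℕ) = (i : ℕ) + 1 ∧
    ((x = top i ∧ y = top j) ∨ (x = top j ∧ y = top i) ∨
     (x = bot i ∧ y = bot j) ∨ (x = bot j ∧ y = bot i))) ∨
  (∃ i, adjIn (aislePath i) x y ∨ adjIn (aislePath i) y x)

/-- the length of a walk, written as a list of vertices: the sum of the lengths
of its edges, counted with multiplicity -/
noncomputable def pathLen {α : Type*} (len : α → α → ℝ) (r : List α) : ℝ :=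
  ((r.zip r.tail).map fun p => len p.1 p.2).sum

/-- a tour: a closed walk starting and ending at `s` -/
def IsTourFrom (s : SBV n sz) (r : List (SBV n sz)) : Prop :=
  r.head? = some s ∧ r.getLast? = some s ∧ r.Chain' Adj

/-- the tour `r'` is better than the tour `r`: every picking vertex visited by
`r` is also visited by `r'`, and `r'` is strictly shorter than `r` -/
def Better (len : SBV n sz → SBV n sz → ℝ) (r' r : List (SBV n sz)) : Prop :=
  (∀ v, IsPick v → v ∈ r → v ∈ r') ∧ pathLen len r' < pathLen len r

/-- number of contiguous occurrences of `seg` in `r` -/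
def occCount {α : Type*} [DecidableEq α] (seg r : List α) : ℕ :=
  ((List.range r.length).filter fun p => seg.isPrefixOf (r.drop p)).length

inductive W (len : SBV n sz → SBV n sz → ℝ) : SBV n sz → SBV n sz → Set (SBV n sz) → ℝ → Prop
  | nil (x) : W len x x {x} 0
  | cons {x y z S a} : Adj x y → W len y z S a → W len x z (insert x S) (len x y + a)

theorem W.trans {len : SBV n sz → SBV n sz → ℝ} {x y z S T a b} (h : W len x y S a)
    (h' : W len y z T b) : W len x z (S ∪ T) (a + b) := by
  induction h with
  | nil x =>
    have hx : x ∈ T := by cases h' <;> simp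
    have : ({x} : Set (SBV n sz)) ∪ T = T := by
      ext v; simp; rintro rfl; exact hx
    rw [this, zero_add]; exact h'
  | cons h1 _ ih =>
    rw [Set.insert_union, add_assoc]; exact W.cons h1 (ih h')

theorem Adj.symm {x y : SBV n sz} (h : Adj x y) : Adj y x := by
  rcases h with ⟨i, j, hij, h⟩ | ⟨i, h⟩
  · exact Or.inl ⟨i, j, hij, by tauto⟩
  · exact Or.inr ⟨i, h.symm⟩

theorem W.single {len : SBV n sz → SBV n sz → ℝ} {x y} (h : Adj x y) :
    W len x y {x, y} (len x y) := by
  have := W.cons h (W.nil (len := len) y)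
  simpa using this

theorem W.left_mem {len : SBV n sz → SBV n sz → ℝ} {x y S a} (h : W len x y S a) : x ∈ S := by
  cases h <;> simp

theorem W.symm {len : SBV n sz → SBV n sz → ℝ} (hs : ∀ x y, len x y = len y x)
    {x y S a} (h : W len x y S a) : W len y x S a := by
  induction h with
  | nil x => exact W.nil x
  | @cons x y z S a h1 h2 ih =>
    have := ih.trans (W.single (len := len) h1.symm)
    have e : S ∪ {y, x} = insert x S := by
      ext v
      have := h2.left_mem
      simp only [Set.mem_union, Set.mem_insert_iff, Set.mem_singleton_iff]
      constructor
      · rintro (h | rfl | h) <;> tauto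
      · tauto
    rw [e, hs y x, add_comm] at this
    exact this

theorem W.nonneg {len : SBV n sz → SBV n sz → ℝ} (hpos : ∀ x y, Adj x y → 0 < len x y)
    {x y S a} (h : W len x y S a) : 0 ≤ a := by
  induction h with
  | nil x => exact le_rfl
  | cons h1 _ ih => have := hpos _ _ h1; linarith

theorem pathLen_cons {α : Type*} (len : α → α → ℝ) (x y : α) (l : List α) :
    pathLen len (x :: y :: l) = len x y + pathLen len (y :: l) := by
  simp [pathLen]

theorem pathLen_append {α : Type*} (len : α → α → ℝ) (l : List α) (x : α) (l' : List α) :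
    pathLen len (l ++ x :: l') = pathLen len (l ++ [x]) + pathLen len (x :: l') := by
  induction l with
  | nil => simp [pathLen]
  | cons a l ih =>
    cases l with
    | nil => simp [pathLen]
    | cons b l =>
      simp only [List.cons_append, pathLen_cons] at ih ⊢
      rw [ih]; ring

theorem pathLen_reverse {α : Type*} (len : α → α → ℝ) (hs : ∀ x y, len x y = len y x)
    (l : List α) : pathLen len l.reverse = pathLen len l := by
  induction l with
  | nil => rfl
  | cons a l ih =>
    cases l with
    | nil => rfl
    | cons b l =>
      rw [pathLen_cons, ← ih]
      simp only [List.reverse_cons, List.append_assoc, List.cons_append, List.nil_append]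
      rw [pathLen_append]
      simp [pathLen, hs a b, add_comm]

theorem W.of_list (len : SBV n sz → SBV n sz → ℝ) (l : List (SBV n sz)) :
    ∀ x y, l.head? = some x → l.getLast? = some y → l.IsChain Adj →
      W len x y {v | v ∈ l} (pathLen len l) := by
  induction l with
  | nil => simp
  | cons a l ih =>
    intro x y hx hy hc
    cases l with
    | nil =>
      simp at hx hy; subst hx; subst hy
      have : {v | v ∈ [a]} = ({a} : Set (SBV n sz)) := by ext; simp
      rw [this]; simpa [pathLen] using W.nil (len := len) a
    | cons b l =>
      simp at hx; subst hx
      rw [List.isChain_cons_cons] at hc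
      have := W.cons hc.1 (ih b y rfl (by simpa using hy) hc.2)
      rw [pathLen_cons]
      convert this using 1
      ext v; simp

theorem W.to_list {len : SBV n sz → SBV n sz → ℝ} {x y S a} (h : W len x y S a) :
    ∃ l : List (SBV n sz), l.head? = some x ∧ l.getLast? = some y ∧ l.IsChain Adj ∧
      pathLen len l = a ∧ ∀ v, v ∈ l ↔ v ∈ S := by
  induction h with
  | nil x => exact ⟨[x], by simp [pathLen]⟩
  | @cons x y z S a h1 h2 ih =>
    obtain ⟨l, hh, hl, hc, hp, hm⟩ := ih
    cases l with
    | nil => simp at hh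
    | cons b l =>
      simp at hh; subst hh
      refine ⟨x :: b :: l, rfl, by simpa using hl, ?_, ?_, ?_⟩
      · rw [List.isChain_cons_cons]; exact ⟨h1, hc⟩
      · rw [pathLen_cons, hp]
      · intro v; rw [List.mem_cons, hm]; rfl

/-- end vertex of an aisle -/
def vert (σ : Bool) (i : Fin n) : SBV n sz := if σ then top i else bot i

/-- picking vertex nearest to the end -/
def np (σ : Bool) (i : Fin n) : SBV n sz := if σ then pk i 0 else pk i (Fin.last _)

theorem aisle_adjIn {i : Fin n} {x y : SBV n sz} (h : adjIn (aislePath i) x y) :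
    (x = top i ∧ y = pk i 0) ∨ (∃ k k', x = pk i k ∧ y = pk i k') ∨
      (x = pk i (Fin.last _) ∧ y = bot i) := by
  obtain ⟨p, h1, h2⟩ := h
  rcases p with _ | p
  · left
    simp [aislePath] at h1 h2
    exact ⟨h1.symm, h2.symm⟩
  · right
    simp only [aislePath, List.getElem?_cons_succ] at h1 h2
    by_cases hp : p + 1 < sz i + 1
    · left
      rw [List.getElem?_append_left (by simp; omega)] at h1 h2
      simp only [List.getElem?_ofFn] at h1 h2
      rw [dif_pos (by omega)] at h1 h2
      exact ⟨_, _, (Option.some.inj h1).symm, (Option.some.inj h2).symm⟩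
    · by_cases hp2 : p = sz i
      · right
        subst hp2
        rw [List.getElem?_append_left (by simp)] at h1
        rw [List.getElem?_append_right (by simp)] at h2
        simp only [List.getElem?_ofFn] at h1
        rw [dif_pos (by omega)] at h1
        simp at h2
        exact ⟨(Option.some.inj h1).symm, h2.symm⟩
      · rw [List.getElem?_append_right (by simp; omega)] at h2
        have : p + 1 - (sz i + 1) ≠ 0 := by omega
        simp [List.getElem?_singleton] at h2
        omega

theorem adj_vert {σ : Bool} {i : Fin n} {y : SBV n sz} (h : Adj (vert σ i) y) :
    (∃ j : Fin n, ((j : ℕ) = i + 1 ∨ (i : ℕ) = j + 1) ∧ y = vert σ j) ∨ y = np σ i := by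
  rcases h with ⟨a, b, hab, h⟩ | ⟨a, h⟩
  · left
    cases σ <;> simp [vert, top, bot] at h ⊢
    · rcases h with ⟨rfl, rfl⟩ | ⟨rfl, rfl⟩
      · exact ⟨b, Or.inl hab, rfl⟩
      · exact ⟨a, Or.inr hab, rfl⟩
    · rcases h with ⟨rfl, rfl⟩ | ⟨rfl, rfl⟩
      · exact ⟨b, Or.inl hab, rfl⟩
      · exact ⟨a, Or.inr hab, rfl⟩
  · right
    rcases h with h | h <;> rcases aisle_adjIn h with ⟨h1, h2⟩ | ⟨k, k', h1, h2⟩ | ⟨h1, h2⟩ <;>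
      cases σ <;> simp [vert, top, bot, pk, np] at h1 h2 ⊢
    · subst h1; exact h2
    · subst h2; exact h1

theorem adj_cross (σ : Bool) {i j : Fin n} (h : (j : ℕ) = i + 1 ∨ (i : ℕ) = j + 1) :
    Adj (vert (sz := sz) σ i) (vert σ j) := by
  left
  rcases h with h | h
  · exact ⟨i, j, h, by cases σ <;> simp [vert]⟩
  · exact ⟨j, i, h, by cases σ <;> simp [vert]⟩

theorem aisle_chain (i : Fin n) : (aislePath (sz := sz) i).IsChain Adj := by
  rw [List.isChain_iff_getElem]
  intro p hp
  right
  refine ⟨i, Or.inl ⟨p, ?_, ?_⟩⟩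
  · simp
  · simp

theorem vert_not_pick (σ : Bool) (i : Fin n) : ¬ IsPick (vert (sz := sz) σ i) := by
  rintro ⟨j, k, h⟩
  cases σ <;> simp [vert, top, bot, pk] at h

/-- decomposition at the first pick -/
theorem first_pick {len : SBV n sz → SBV n sz → ℝ}
    (hmir : ∀ (σ : Bool) (i j : Fin n), ((j : ℕ) = i + 1 ∨ (i : ℕ) = j + 1) →
      len (vert σ i) (vert σ j) = len (vert (!σ) i) (vert (!σ) j))
    (σ : Bool) {x z S a} (h : W len x z S a) :
    ∀ i, x = vert σ i → (∀ v ∈ S, ¬ IsPick v) ∨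
      ∃ k T S2 b c, W len (vert (!σ) i) (vert (!σ) k) T b ∧ W len (np σ k) z S2 c ∧
        a = b + len (vert σ k) (np σ k) + c ∧ ∀ v ∈ S, IsPick v → v ∈ S2 := by
  induction h with
  | nil x =>
    rintro i rfl
    left
    rintro v rfl
    exact vert_not_pick _ _
  | @cons x y z S a h1 h2 ih =>
    rintro i rfl
    rcases adj_vert h1 with ⟨j, hj, rfl⟩ | rfl
    · rcases ih j rfl with h | ⟨k, T, S2, b, c, hT, hS, ha, hv⟩
      · left
        rintro v (rfl | hv)
        · exact vert_not_pick _ _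
        · exact h v hv
      · right
        refine ⟨k, _, S2, _, c, W.cons (adj_cross (!σ) hj) hT, hS, ?_, ?_⟩
        · rw [ha, hmir σ i j hj]; ring
        · rintro v (rfl | hv') hp
          · exact absurd hp (vert_not_pick _ _)
          · exact hv v hv' hp
    · right
      refine ⟨i, _, S, 0, a, W.nil _, h2, by ring, ?_⟩
      rintro v (rfl | hv') hp
      · exact absurd hp (vert_not_pick _ _)
      · exact hv'

/-- set of vertices of an aisle path -/
def aset (i : Fin n) : Set (SBV n sz) := {v | v ∈ aislePath i}

theorem np_adj (σ : Bool) (i : Fin n) : Adj (vert (sz := sz) σ i) (np σ i) := by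
  right
  refine ⟨i, ?_⟩
  cases σ
  · right
    refine ⟨sz i + 1, ?_, ?_⟩
    · simp only [aislePath, List.getElem?_cons_succ]
      rw [List.getElem?_append_left (by simp)]
      simp only [List.getElem?_ofFn]
      rw [dif_pos (by omega)]
      rfl
    · simp only [aislePath, List.getElem?_cons_succ]
      rw [List.getElem?_append_right (by simp)]
      simp [vert]
  · left
    exact ⟨0, by simp [aislePath, vert], by simp [aislePath, np]⟩

theorem aisle_part {len : SBV n sz → SBV n sz → ℝ} (hs : ∀ x y, len x y = len y x)
    (σ : Bool) (i : Fin n) : ∃ S a, W len (vert σ i) (np (!σ) i) S a ∧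
      pathLen len (aislePath i) = a + len (vert (!σ) i) (np (!σ) i) ∧
      ∀ v ∈ aset i, IsPick v → v ∈ S := by
  have hc := aisle_chain (sz := sz) i
  cases σ
  · refine ⟨_, _, (W.of_list len ((List.ofFn fun k : Fin (sz i + 1) => pk i k) ++ [bot i])
      (pk i 0) (bot i) ?_ (by rw [List.getLast?_append]; rfl) ?_).symm hs, ?_, ?_⟩
    · simp [List.ofFn_succ]
    · exact hc.tail
    · simp only [aislePath, List.ofFn_succ, List.cons_append, pathLen_cons]
      simp [vert, np]; ring
    · intro v hv hp
      simp only [aset, aislePath, Set.mem_ofPred_eq, List.mem_cons] at hv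
      rcases hv with rfl | hv
      · exact absurd hp (vert_not_pick true i)
      · exact hv
  · have e : (List.ofFn fun k : Fin (sz i + 1) => pk (sz := sz) i k) =
      (List.ofFn fun k : Fin (sz i) => pk i k.castSucc) ++ [pk i (Fin.last _)] := by
      rw [List.ofFn_succ_last]
    refine ⟨_, _, W.of_list len (top i :: (List.ofFn fun k : Fin (sz i + 1) => pk i k))
      (top i) (pk i (Fin.last _)) rfl ?_ ?_, ?_, ?_⟩
    · rw [e, ← List.cons_append, List.getLast?_append]; simp
    · have : aislePath i = (top i :: (List.ofFn fun k : Fin (sz i + 1) => pk (sz := sz) i k)) ++ [bot i] := rfl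
      rw [this] at hc
      exact hc.left_of_append
    · rw [aislePath, e]
      have := pathLen_append len (top i :: (List.ofFn fun k : Fin (sz i) => pk i k.castSucc)) (pk i (Fin.last _)) [bot i]
      simp only [List.cons_append, List.append_assoc, List.nil_append] at this ⊢
      rw [this, pathLen_cons len _ (bot i)]
      simp [pathLen, vert, np, hs]
    · intro v hv hp
      simp only [aset, aislePath, Set.mem_ofPred_eq, List.mem_cons, List.mem_append] at hv
      simp only [Set.mem_ofPred_eq, List.mem_cons]
      rcases hv with rfl | hv | hv | hv
      · exact Or.inl rfl
      · exact Or.inr hv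
      · subst hv; exact absurd hp (vert_not_pick false i)
      · simp at hv

theorem two_occ {α : Type*} [DecidableEq α] (seg r : List α) (h : 2 ≤ occCount seg r) :
    ∃ p q, p < q ∧ seg <+: r.drop p ∧ seg <+: r.drop q := by
  unfold occCount at h
  set F := (List.range r.length).filter fun p => seg.isPrefixOf (r.drop p) with hF
  have hs : F.Pairwise (· < ·) := List.pairwise_lt_range.filter _
  have hm : ∀ p ∈ F, seg <+: r.drop p := by
    intro p hp
    rw [hF, List.mem_filter] at hp
    exact List.isPrefixOf_iff_prefix.1 hp.2
  match F, h, hs, hm with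
  | a :: b :: l, _, hs, hm =>
    exact ⟨a, b, (List.pairwise_cons.1 hs).1 b (by simp), hm a (by simp), hm b (by simp)⟩

theorem one_occ {α : Type*} [DecidableEq α] (seg r : List α) (h : 1 ≤ occCount seg r) :
    ∃ p, seg <+: r.drop p := by
  unfold occCount at h
  obtain ⟨p, hp⟩ := List.exists_mem_of_length_pos h
  rw [List.mem_filter] at hp
  exact ⟨p, List.isPrefixOf_iff_prefix.1 hp.2⟩

theorem occ_split {α : Type*} (r : List α) (x y z : α) (mid m2 : List α) (p q : ℕ) (hpq : p < q)
    (h1 : x :: (mid ++ [y]) <+: r.drop p) (h2 : z :: m2 <+: r.drop q) (hz : z ∉ mid) :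
    ∃ l1 l2 l3 t, r = l1 ++ x :: (mid ++ y :: l2) ∧ y :: l2 = l3 ++ z :: (m2 ++ t) := by
  obtain ⟨l2, h1⟩ := h1
  obtain ⟨t, h2⟩ := h2
  obtain ⟨j, rfl⟩ := Nat.exists_eq_add_of_lt hpq
  have h3 : r.drop (p + j + 1) = (mid ++ y :: l2).drop j := by
    rw [add_assoc, ← List.drop_drop, ← h1, List.cons_append, List.drop_succ_cons,
      List.append_assoc]
    rfl
  rw [h3] at h2
  refine ⟨r.take p, l2, (y :: l2).take (j - mid.length), t, ?_, ?_⟩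
  · conv_lhs => rw [← List.take_append_drop p r, ← h1]
    simp
  · have hj : mid.length ≤ j := by
      by_contra hlt
      push Not at hlt
      rw [List.drop_append_of_le_length hlt.le] at h2
      rw [List.drop_eq_getElem_cons hlt, List.cons_append, List.cons_append] at h2
      have h4 := (List.cons.inj h2).1
      exact hz (h4 ▸ List.getElem_mem _)
    rw [List.drop_append, List.drop_eq_nil_of_le hj, List.nil_append] at h2
    conv_lhs => rw [← List.take_append_drop (j - mid.length) (y :: l2), ← h2]
    simp

/-- pick vertices of an aisle from the given end -/
def mid (σ : Bool) (i : Fin n) : List (SBV n sz) :=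
  if σ then (List.ofFn fun k : Fin (sz i + 1) => pk i k)
  else (List.ofFn fun k : Fin (sz i + 1) => pk i k).reverse

/-- directed aisle path -/
def dpath (σ : Bool) (i : Fin n) : List (SBV n sz) := vert σ i :: (mid σ i ++ [vert (!σ) i])

theorem dpath_true (i : Fin n) : dpath (sz := sz) true i = aislePath i := by
  simp [dpath, mid, aislePath, vert]

theorem dpath_false (i : Fin n) : dpath (sz := sz) false i = (aislePath i).reverse := by
  simp [dpath, mid, aislePath, vert]

theorem dpath_mem (σ : Bool) (i : Fin n) : {v | v ∈ dpath (sz := sz) σ i} = aset i := by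
  cases σ
  · rw [dpath_false]; ext; simp [aset]
  · rw [dpath_true]; rfl

theorem dpath_len {len : SBV n sz → SBV n sz → ℝ} (hs : ∀ x y, len x y = len y x)
    (σ : Bool) (i : Fin n) : pathLen len (dpath σ i) = pathLen len (aislePath i) := by
  cases σ
  · rw [dpath_false, pathLen_reverse _ hs]
  · rw [dpath_true]

theorem vert_not_mid (τ σ : Bool) (i : Fin n) : vert τ i ∉ mid (sz := sz) σ i := by
  intro h
  apply vert_not_pick (sz := sz) τ i
  have h' : vert τ i ∈ (List.ofFn fun k : Fin (sz i + 1) => pk (sz := sz) i k) := by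
    cases σ
    · exact List.mem_reverse.1 h
    · exact h
  obtain ⟨k, hk⟩ := (List.mem_ofFn' _ _).1 h'
  exact ⟨i, k, hk.symm⟩

theorem W.split {len : SBV n sz → SBV n sz → ℝ} (hs : ∀ x y, len x y = len y x) {s t : SBV n sz}
    {r l1 l2 : List (SBV n sz)} {σ : Bool} {i : Fin n}
    (hr : r = l1 ++ vert σ i :: (mid σ i ++ vert (!σ) i :: l2))
    (h1 : r.head? = some s) (h2 : r.getLast? = some t) (h3 : r.IsChain Adj) :
    W len s (vert σ i) {v | v ∈ l1 ++ [vert σ i]} (pathLen len (l1 ++ [vert σ i])) ∧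
    W len (vert σ i) (vert (!σ) i) (aset i) (pathLen len (aislePath i)) ∧
    ((vert (!σ) i :: l2).getLast? = some t ∧ (vert (!σ) i :: l2).IsChain Adj) ∧
    pathLen len r = pathLen len (l1 ++ [vert σ i]) + pathLen len (aislePath i) +
      pathLen len (vert (!σ) i :: l2) ∧
    ∀ v ∈ r, v ∈ l1 ++ [vert σ i] ∨ v ∈ aset i ∨ v ∈ vert (!σ) i :: l2 := by
  have e1 : r = (l1 ++ [vert σ i]) ++ (mid σ i ++ vert (!σ) i :: l2) := by simp [hr]
  have e2 : r = (l1 ++ vert σ i :: mid σ i) ++ (vert (!σ) i :: l2) := by simp [hr]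
  have e3 : r = l1 ++ (dpath σ i ++ l2) := by simp [hr, dpath]
  refine ⟨?_, ?_, ⟨?_, ?_⟩, ?_, ?_⟩
  · apply W.of_list
    · rw [e1] at h1
      rw [List.head?_append] at h1
      rw [← h1]; simp
    · simp
    · rw [e1] at h3; exact h3.left_of_append
  · rw [← dpath_mem σ, ← dpath_len hs σ]
    apply W.of_list
    · simp [dpath]
    · rw [dpath, ← List.cons_append, List.getLast?_append]; simp
    · rw [e3] at h3; exact h3.right_of_append.left_of_append
  · rw [e2, List.getLast?_append] at h2
    rw [← h2]; simp [List.getLast?_cons]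
  · rw [e2] at h3; exact h3.right_of_append
  · rw [hr, pathLen_append, ← dpath_len hs σ, ← List.cons_append (a := vert σ i) (as := mid σ i),
      pathLen_append len (vert σ i :: mid σ i), dpath, List.cons_append]
    ring
  · intro v hv
    rw [← dpath_mem σ]
    rw [hr] at hv
    simp [dpath] at hv ⊢
    tauto

theorem key {len : SBV n sz → SBV n sz → ℝ}
    (hs : ∀ x y, len x y = len y x)
    (hpos : ∀ x y, Adj x y → 0 < len x y)
    (hmir : ∀ (σ : Bool) (i j : Fin n), ((j : ℕ) = i + 1 ∨ (i : ℕ) = j + 1) →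
      len (vert σ i) (vert σ j) = len (vert (!σ) i) (vert (!σ) j))
    (haisle : ∀ i i' : Fin n, pathLen len (aislePath i) = pathLen len (aislePath i'))
    (s t : SBV n sz)
    (r : List (SBV n sz)) (h1 : r.head? = some s) (h2 : r.getLast? = some t) (h3 : r.IsChain Adj)
    (σ τ : Bool) (i : Fin n) (p q : ℕ) (hpq : p < q)
    (hp : dpath σ i <+: r.drop p) (hq : dpath τ i <+: r.drop q) :
    ∃ S a, W len s t S a ∧ a < pathLen len r ∧ ∀ v ∈ r, IsPick v → v ∈ S := by
  obtain ⟨l1, l2, l3, l4, hr, hr2⟩ := occ_split r _ _ _ _ _ p q hpq hp hq (vert_not_mid τ σ i)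
  obtain ⟨A, P, ⟨hl, hc⟩, hlen, hmem⟩ := W.split hs hr h1 h2 h3
  have hr2' : vert (!σ) i :: l2 = l3 ++ vert τ i :: (mid τ i ++ vert (!τ) i :: l4) := by
    rw [hr2]; simp
  obtain ⟨B, P', ⟨hl', hc'⟩, hlen', hmem'⟩ := W.split hs hr2' rfl hl hc
  have C := W.of_list len _ _ _ rfl hl' hc'
  rw [hlen'] at hlen
  have hmem2 : ∀ v ∈ r, v ∈ l1 ++ [vert σ i] ∨ v ∈ aset i ∨ v ∈ l3 ++ [vert τ i] ∨
      v ∈ vert (!τ) i :: l4 := by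
    intro v hv
    rcases hmem v hv with h | h | h
    · tauto
    · tauto
    · have := hmem' v h; tauto
  rw [hlen]
  obtain ⟨Q, b, hQ, hb, hQS⟩ := aisle_part hs σ i
  have hps := hpos _ _ (np_adj (sz := sz) (!σ) i)
  by_cases hστ : τ = σ
  · subst hστ
    refine ⟨_, _, (A.trans (hQ.trans ((hQ.symm hs).trans ((B.symm hs).trans C)))), ?_, ?_⟩
    · linarith
    · intro v hv hpk
      simp only [Set.mem_union, Set.mem_ofPred_eq]
      have := hQS v
      have := hmem2 v hv
      tauto
  · obtain rfl : τ = !σ := by clear * - hστ; cases σ <;> cases τ <;> simp at hστ ⊢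
    rw [Bool.not_not] at *
    rcases first_pick hmir (!σ) B i rfl with hno | ⟨k, T, S2, c, e, hT, hS2, ha, hv2⟩
    · refine ⟨_, _, A.trans (hQ.trans ((hQ.symm hs).trans C)), ?_, ?_⟩
      · have := B.nonneg hpos
        linarith
      · intro v hv hpk
        simp only [Set.mem_union, Set.mem_ofPred_eq]
        have := hQS v
        have := hmem2 v hv
        have := hno v
        simp only [Set.mem_ofPred_eq] at this
        tauto
    · rw [Bool.not_not] at hT
      obtain ⟨Qk, bk, hQk, hbk, hQSk⟩ := aisle_part hs σ k
      have hpk' := hpos _ _ (np_adj (sz := sz) (!σ) k)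
      refine ⟨_, _, A.trans (hT.trans (hQk.trans (hS2.trans (P'.trans C)))), ?_, ?_⟩
      · have := haisle i k
        linarith
      · intro v hv hpk
        simp only [Set.mem_union, Set.mem_ofPred_eq]
        have := hmem2 v hv
        have := hv2 v
        simp only [Set.mem_ofPred_eq] at this
        tauto

/-- Theorem 4: in a single-block warehouse graph (with symmetric positive edge
lengths, corresponding top and bottom cross-aisle edges of equal length, and
all aisle paths of equal total length), for any required set `VR` of picking
vertices, every optimal tour — i.e. every tour visiting all vertices of `VR`
of minimum length among such tours — traverses each aisle at most once: for
each aisle `i` it contains at most one contiguous occurrence of the full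
subpath `u_i v_{i1} … v_{i s_i} d_i` or of its reverse. -/
theorem optimal_tour_traverses_each_aisle_at_most_once
    {n : ℕ} {sz : Fin (n + 1) → ℕ}
    (len : SBV (n + 1) sz → SBV (n + 1) sz → ℝ)
    (hsymm : ∀ x y, len x y = len y x)
    (hpos : ∀ x y, Adj x y → 0 < len x y)
    (hcross : ∀ i j : Fin (n + 1), (j : ℕ) = (i : ℕ) + 1 →
      len (top i) (top j) = len (bot i) (bot j))
    (haisle : ∀ i i' : Fin (n + 1),
      pathLen len (aislePath i) = pathLen len (aislePath i'))
    (VR : Set (SBV (n + 1) sz)) (hVR : ∀ v ∈ VR, IsPick v)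
    (r : List (SBV (n + 1) sz)) (hr : IsTourFrom (top 0) r)
    (hvis : ∀ v ∈ VR, v ∈ r)
    (hopt : ∀ r', IsTourFrom (top 0) r' → (∀ v ∈ VR, v ∈ r') →
      pathLen len r ≤ pathLen len r') :
    ∀ i : Fin (n + 1),
      occCount (aislePath i) r + occCount (aislePath i).reverse r ≤ 1 := by
  intro i
  by_contra hcon
  push Not at hcon
  obtain ⟨h1, h2, h3⟩ := hr
  have hmir : ∀ (σ : Bool) (i j : Fin (n + 1)), ((j : ℕ) = i + 1 ∨ (i : ℕ) = j + 1) →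
      len (vert σ i) (vert σ j) = len (vert (!σ) i) (vert (!σ) j) := by
    intro σ i j h
    rcases h with h | h
    · have := hcross i j h
      cases σ <;> simp [vert, this]
    · have := hcross j i h
      rw [hsymm, hsymm (vert (!σ) i)]
      cases σ <;> simp [vert, this]
  have main : ∃ (σ τ : Bool) (p q : ℕ), p < q ∧ dpath σ i <+: r.drop p ∧
      dpath τ i <+: r.drop q := by
    rw [← dpath_false, ← dpath_true] at hcon
    by_cases ha : 2 ≤ occCount (dpath true i) r
    · obtain ⟨p, q, h⟩ := two_occ _ _ ha
      exact ⟨true, true, p, q, h⟩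
    by_cases hb : 2 ≤ occCount (dpath false i) r
    · obtain ⟨p, q, h⟩ := two_occ _ _ hb
      exact ⟨false, false, p, q, h⟩
    obtain ⟨p, hp⟩ := one_occ (dpath true i) r (by omega)
    obtain ⟨q, hq⟩ := one_occ (dpath false i) r (by omega)
    rcases lt_trichotomy p q with h | h | h
    · exact ⟨true, false, p, q, h, hp, hq⟩
    · subst h
      obtain ⟨a, ha⟩ := hp
      obtain ⟨b, hb⟩ := hq
      rw [← ha] at hb
      simp [dpath, vert, top, bot] at hb
    · exact ⟨false, true, q, p, h, hq, hp⟩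
  obtain ⟨σ, τ, p, q, hpq, hp, hq⟩ := main
  obtain ⟨S, a, hW, ha, hS⟩ := key hsymm hpos hmir haisle _ _ r h1 h2 h3 σ τ i p q hpq hp hq
  obtain ⟨l, g1, g2, g3, g4, g5⟩ := hW.to_list
  have := hopt l ⟨g1, g2, g3⟩ (fun v hv => (g5 v).2 (hS v (hvis v hv) (hVR v hv)))
  linarith

end SingleBlock
end

section
/- In a two-block warehouse graph, for any required set V_R of picking vertices there exists an optimal tour that traverses each subaisle i ∈ {2,3,…,W_sub} at most once (the topmost-left subaisle 1 may be traversed more than once). -/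
namespace TwoBlock

/-- Vertices of a two-block warehouse with `n` vertical aisles and three
horizontal cross-aisles (`0` = top, `1` = middle, `2` = bottom).  Each aisle
`i` is split by the middle cross-aisle into a top subaisle `(i,0)` and a
bottom subaisle `(i,1)`; subaisle `(i,j)` contains `m i j + 1` picking
vertices.  `Sum.inl (i, j)` is the artificial vertex at aisle `i` on
cross-aisle `j`; `Sum.inr ⟨i, j, k⟩` is the `k`-th picking vertex (from north
to south) of subaisle `(i,j)`. -/
abbrev TBV (n : ℕ) (m : Fin n → Fin 2 → ℕ) : Type :=
  (Fin n × Fin 3) ⊕ ((i : Fin n) × (j : Fin 2) × Fin (m i j + 1))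

variable {n : ℕ} {m : Fin n → Fin 2 → ℕ}

/-- the artificial vertex at aisle `i` on cross-aisle `j` -/
def art (i : Fin n) (j : Fin 3) : TBV n m := Sum.inl (i, j)

/-- the `k`-th picking vertex of subaisle `(i,j)` -/
def pk (i : Fin n) (j : Fin 2) (k : Fin (m i j + 1)) : TBV n m := Sum.inr ⟨i, j, k⟩

/-- `v` is a picking vertex -/
def IsPick (v : TBV n m) : Prop := ∃ i j k, v = pk i j k

/-- the full path through subaisle `(i,j)` from its northern endpoint to its
southern endpoint -/
def subPath (i : Fin n) (j : Fin 2) : List (TBV n m) :=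
  art i j.castSucc :: ((List.ofFn fun k : Fin (m i j + 1) => pk i j k) ++ [art i j.succ])

/-- `x` and `y` occur consecutively (in this order) in the list `l` -/
def adjIn {α : Type*} (l : List α) (x y : α) : Prop :=
  ∃ p : ℕ, l[p]? = some x ∧ l[p + 1]? = some y

/-- adjacency in the two-block warehouse graph: neighboring artificial
vertices along each of the three cross-aisles, and consecutive vertices along
each subaisle path -/
def Adj (x y : TBV n m) : Prop :=
  (∃ (i i' : Fin n) (j : Fin 3), (i' : ℕ) = (i : ℕ) + 1 ∧
    ((x = art i j ∧ y = art i' j) ∨ (x = art i' j ∧ y = art i j))) ∨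
  (∃ i j, adjIn (subPath i j) x y ∨ adjIn (subPath i j) y x)

/-- the length of a walk, written as a list of vertices: the sum of the
lengths of its edges, counted with multiplicity -/
noncomputable def pathLen {α : Type*} (len : α → α → ℝ) (r : List α) : ℝ :=
  ((r.zip r.tail).map fun p => len p.1 p.2).sum

/-- a tour: a closed walk starting and ending at `s` -/
def IsTourFrom (s : TBV n m) (r : List (TBV n m)) : Prop :=
  r.head? = some s ∧ r.getLast? = some s ∧ r.Chain' Adj

/-- the full path through subaisle `(i,j)` in the direction `dir`
(`true` = from north to south, `false` = from south to north) -/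
def dirPath (i : Fin n) (j : Fin 2) (dir : Bool) : List (TBV n m) :=
  if dir then subPath i j else (subPath i j).reverse

/-- the tour `r` performs a full traversal of subaisle `(i,j)` in direction
`dir` starting at position `q` -/
def TravAt (r : List (TBV n m)) (q : ℕ) (i : Fin n) (j : Fin 2) (dir : Bool) : Prop :=
  dirPath i j dir <+: r.drop q

/-- `r` is a no-reversal tour: whenever it enters a subaisle it traverses it
completely from one endpoint to the other, i.e. every occurrence of a picking
vertex lies inside a contiguous full traversal of its subaisle -/
def NoReversal (r : List (TBV n m)) : Prop :=
  ∀ (p : ℕ) (i : Fin n) (j : Fin 2) (k : Fin (m i j + 1)),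
    r[p]? = some (pk i j k) →
      ∃ q dir, TravAt r q i j dir ∧ q ≤ p ∧ p < q + (subPath (m := m) i j).length

/-- the tour `r` traverses subaisle `(i,j)` (at least once) -/
def Traverses (r : List (TBV n m)) (i : Fin n) (j : Fin 2) : Prop :=
  ∃ q dir, TravAt r q i j dir

/-- `K1` (resp. `K2`) is the set of aisles whose top (resp. bottom) subaisle
contains a required picking vertex; `r` traverses every required subaisle at
least once -/
def TraversesAll (K1 K2 : Finset (Fin n)) (r : List (TBV n m)) : Prop :=
  (∀ a ∈ K1, Traverses r a 0) ∧ (∀ a ∈ K2, Traverses r a 1)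

/-- `v` is a picking vertex (Boolean version) -/
def isPickV : TBV n m → Bool := fun v =>
  match v with
  | Sum.inr _ => true
  | Sum.inl _ => false

/-- the total vertical distance of a tour: the sum of the lengths of all
subaisle (vertical) edges it traverses, counted with multiplicity -/
noncomputable def vertLen (len : TBV n m → TBV n m → ℝ) (r : List (TBV n m)) : ℝ :=
  ((r.zip r.tail).map fun p =>
    if isPickV p.1 || isPickV p.2 then len p.1 p.2 else 0).sum

/-- number of contiguous occurrences of `seg` in `r` -/
def occCount {α : Type*} [DecidableEq α] (seg r : List α) : ℕ :=
  ((List.range r.length).filter fun p => seg.isPrefixOf (r.drop p)).length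

section Gen
open Classical
variable {V : Type*}

noncomputable def ec : List V → Sym2 V → ℕ
| x::y::l, e => (if s(x,y) = e then 1 else 0) + ec (y::l) e
| [_], _ => 0
| [], _ => 0

inductive Wk : V → V → List V → Prop
| nil (a : V) : Wk a a [a]
| cons (a : V) {b c : V} {r : List V} (h : Wk b c r) : Wk a c (a::r)

lemma Wk.exists_cons {a b : V} {r : List V} (h : Wk a b r) : ∃ l, r = a :: l := by
  cases h <;> exact ⟨_, rfl⟩

lemma ec_cons {a b c : V} {r : List V} (h : Wk b c r) (e : Sym2 V) :
    ec (a::r) e = (if s(a,b) = e then 1 else 0) + ec r e := by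
  obtain ⟨l, rfl⟩ := h.exists_cons
  rfl

lemma wk_of : ∀ (r : List V) (a b : V), r.head? = some a → r.getLast? = some b → Wk a b r
  | [], a, b, h, _ => by simp at h
  | [x], a, b, h, h' => by
    simp at h h'; subst h; subst h'; exact Wk.nil _
  | x::y::l, a, b, h, h' => by
    simp at h; subst h
    exact Wk.cons _ (wk_of (y::l) y b rfl (by simpa using h'))

lemma Wk.head {a b : V} {r : List V} (h : Wk a b r) : r.head? = some a := by
  obtain ⟨l, rfl⟩ := h.exists_cons
  rfl

lemma Wk.last {a b : V} {r : List V} (h : Wk a b r) : r.getLast? = some b := by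
  induction h with
  | nil a => rfl
  | cons a h ih =>
    obtain ⟨l, rfl⟩ := h.exists_cons
    simpa using ih

lemma Wk.append {a b c : V} {p q : List V} (hp : Wk a b p) (hq : Wk b c (b::q)) :
    Wk a c (p ++ q) ∧ ∀ e, ec (p ++ q) e = ec p e + ec (b::q) e := by
  induction hp with
  | nil a => exact ⟨hq, fun e => by simp [ec]⟩
  | cons a h ih =>
    obtain ⟨h1, h2⟩ := ih hq
    refine ⟨Wk.cons _ h1, fun e => ?_⟩
    rw [List.cons_append, ec_cons h1, ec_cons h, h2]; ring

lemma Wk.split {a b v : V} {r : List V} (h : Wk a b r) (hv : v ∈ r) :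
    ∃ p q, r = p ++ q ∧ Wk a v p ∧ Wk v b (v::q) := by
  induction h with
  | nil a =>
    simp at hv; subst hv
    exact ⟨[v], [], rfl, Wk.nil _, Wk.nil _⟩
  | cons a h ih =>
    rename_i b c r
    by_cases hva : v = a
    · subst hva
      exact ⟨[v], r, rfl, Wk.nil _, Wk.cons _ h⟩
    · obtain ⟨p, q, e, h1, h2⟩ := ih (by simpa [hva] using hv)
      exact ⟨a::p, q, by simp [e], Wk.cons _ h1, h2⟩

lemma ec_mem : ∀ (r : List V) (e : Sym2 V), 0 < ec r e →
    ∃ A x y B, r = A ++ x::y::B ∧ e = s(x,y)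
  | [], e, h => by simp [ec] at h
  | [x], e, h => by simp [ec] at h
  | x::y::l, e, h => by
    by_cases h' : s(x,y) = e
    · exact ⟨[], x, y, l, rfl, h'.symm⟩
    · obtain ⟨A, x', y', B, h1, h2⟩ := ec_mem (y::l) e (by simpa [ec, h'] using h)
      exact ⟨x::A, x', y', B, by simp [h1], h2⟩

lemma ec_pos_of : ∀ (A B : List V) (x y : V), 0 < ec (A ++ x::y::B) s(x,y)
  | [], B, x, y => by simp [ec]
  | [a], B, x, y => by
    have := ec_pos_of [] B x y
    simp only [List.nil_append, List.cons_append, ec] at this ⊢; omega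
  | a::b::A, B, x, y => by
    have := ec_pos_of (b::A) B x y
    simp only [List.cons_append, ec] at this ⊢; omega

lemma ec_le_one : ∀ (r : List V) (_ : r.Nodup) (e : Sym2 V), ec r e ≤ 1
  | [], _, e => by simp [ec]
  | [x], _, e => by simp [ec]
  | x::y::l, h, e => by
    have ih := ec_le_one (y::l) (List.nodup_cons.1 h).2 e
    simp only [ec]
    split_ifs with h'
    · by_contra hc
      have : 0 < ec (y::l) e := by omega
      obtain ⟨A, x', y', B, h1, h2⟩ := ec_mem _ _ this
      have hx : x ∈ s(x',y') := by rw [← h2, ← h']; simp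
      have : x ∈ y::l := by
        rw [h1]; simp at hx; rcases hx with rfl | rfl <;> simp
      exact (List.nodup_cons.1 h).1 this
    · omega

/-- connectivity -/
def Cn (w : Sym2 V → ℕ) : V → V → Prop := Relation.ReflTransGen fun x y => 0 < w s(x,y)

lemma Cn.symm {w : Sym2 V → ℕ} {x y : V} (h : Cn w x y) : Cn w y x := by
  induction h with
  | refl => exact Relation.ReflTransGen.refl
  | tail _ h ih =>
    refine Relation.ReflTransGen.trans (Relation.ReflTransGen.single ?_) ih
    rw [Sym2.eq_swap]; exact h

lemma Cn.of_edge {w : Sym2 V → ℕ} {x y : V} (h : 0 < w s(x,y)) : Cn w x y :=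
  Relation.ReflTransGen.single h

lemma Cn.map {w w' : Sym2 V → ℕ} (f : V → V)
    (hf : ∀ x y, 0 < w s(x,y) → Cn w' (f x) (f y)) {x y : V} (h : Cn w x y) :
    Cn w' (f x) (f y) := by
  induction h with
  | refl => exact Relation.ReflTransGen.refl
  | tail _ h ih => exact ih.trans (hf _ _ h)

lemma Wk.cn {w : Sym2 V → ℕ} {a b : V} {r : List V} (h : Wk a b r)
    (hw : ∀ e, 0 < ec r e → 0 < w e) : ∀ v ∈ r, Cn w a v := by
  induction h with
  | nil a => intro v hv; simp at hv; subst hv; exact Relation.ReflTransGen.refl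
  | cons a h ih =>
    rename_i b c r
    have e1 : ∀ e, _ := fun e => ec_cons (a := a) h e
    intro v hv
    rcases List.mem_cons.1 hv with rfl | hv
    · exact Relation.ReflTransGen.refl
    · refine Relation.ReflTransGen.trans (Cn.of_edge (hw _ ?_)) (ih (fun e he => hw e ?_) v hv)
      · rw [e1]; simp
      · rw [e1]; omega

lemma Wk.last_mem {a b : V} {r : List V} (h : Wk a b r) : b ∈ r :=
  List.mem_of_getLast? h.last

lemma Wk.mem_of_ec {r : List V} {x y : V} (h : 0 < ec r s(x,y)) : x ∈ r ∧ y ∈ r := by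
  obtain ⟨A, x', y', B, h1, h2⟩ := ec_mem _ _ h
  subst h1
  have := Sym2.eq_iff.1 h2
  rcases this with ⟨rfl, rfl⟩ | ⟨rfl, rfl⟩ <;> simp

lemma pathLen_cons2 (len : V → V → ℝ) (x y : V) (l : List V) :
    pathLen len (x::y::l) = len x y + pathLen len (y::l) := by
  simp [pathLen]

/-! counting occurrences -/
noncomputable def dc (x y : V) : List V → ℕ
| a::b::l => (if a = x ∧ b = y then 1 else 0) + dc x y (b::l)
| [_] => 0
| [] => 0

lemma dc_add {x y : V} (h : x ≠ y) : ∀ r : List V, dc x y r + dc y x r ≤ ec r s(x,y)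
  | [] => by simp [dc]
  | [_] => by simp [dc]
  | a::b::l => by
    have ih := dc_add h (b::l)
    simp only [dc, ec]
    by_cases h1 : a = x ∧ b = y
    · obtain ⟨rfl, rfl⟩ := h1
      simp [h]; omega
    · by_cases h2 : a = y ∧ b = x
      · obtain ⟨rfl, rfl⟩ := h2
        rw [if_neg h1, if_pos ⟨rfl, rfl⟩, if_pos Sym2.eq_swap]; omega
      · rw [if_neg h1, if_neg h2]; omega

lemma occ_cons [DecidableEq V] (seg : List V) (c : V) (r : List V) :
    occCount seg (c::r) = (if seg <+: (c::r) then 1 else 0) + occCount seg r := by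
  unfold occCount
  rw [List.length_cons, List.range_succ_eq_map, List.filter_cons, List.filter_map, ]
  simp only [List.drop_zero, List.isPrefixOf_iff_prefix]
  have : ((fun p => seg.isPrefixOf (List.drop p (c :: r))) ∘ Nat.succ) =
      fun p => seg.isPrefixOf (r.drop p) := by
    funext p; simp
  rw [this]
  split_ifs <;> simp <;> omega

lemma occ_shift [DecidableEq V] (a : V) (seg : List V) (hs : seg ≠ []) :
    ∀ (r : List V) (c : V), occCount (a::seg) (c::r) ≤ occCount seg r
  | [], c => by
    rw [occ_cons]
    have : ¬ (a::seg) <+: [c] := by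
      intro h; have := h.length_le; simp at this; exact hs this
    simp [this, occCount]
  | b::r, c => by
    have ih := occ_shift a seg hs r b
    rw [occ_cons, occ_cons seg]
    have : (a::seg) <+: (c::b::r) → seg <+: (b::r) := fun h => (List.cons_prefix_cons.1 h).2
    split_ifs <;> first | omega | tauto

lemma occ_shift' [DecidableEq V] (a : V) (seg : List V) (hs : seg ≠ []) (r : List V) :
    occCount (a::seg) r ≤ occCount seg r := by
  cases r with
  | nil => simp [occCount]
  | cons c r =>
    refine (occ_shift a seg hs r c).trans ?_
    rw [occ_cons]; omega

lemma occ_app [DecidableEq V] (A seg : List V) (hs : seg ≠ []) (r : List V) :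
    occCount (A ++ seg) r ≤ occCount seg r := by
  induction A with
  | nil => simp
  | cons a A ih => exact (occ_shift' a _ (by simp [hs]) r).trans ih

lemma occ_dc [DecidableEq V] (x y : V) (B : List V) :
    ∀ r : List V, occCount (x::y::B) r ≤ dc x y r
  | [] => by simp [occCount]
  | [a] => by
    rw [occ_cons]
    have : ¬ (x::y::B) <+: [a] := by
      intro h; have := h.length_le; simp at this
    simp [this, occCount]
  | a::b::l => by
    have ih := occ_dc x y B (b::l)
    rw [occ_cons]
    simp only [dc]
    have : (x::y::B) <+: (a::b::l) → (a = x ∧ b = y) := fun h => by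
      have h1 := List.cons_prefix_cons.1 h
      exact ⟨h1.1.symm, (List.cons_prefix_cons.1 h1.2).1.symm⟩
    split_ifs <;> first | omega | tauto

lemma occ_le [DecidableEq V] (seg : List V) (hn : seg.Nodup) (e : Sym2 V) (he : 0 < ec seg e)
    (r : List V) : occCount seg r + occCount seg.reverse r ≤ ec r e := by
  obtain ⟨A, x, y, B, rfl, rfl⟩ := ec_mem _ _ he
  have hxy : x ≠ y := by
    rintro rfl
    have := (List.nodup_append.1 hn).2.1
    simp at this
  refine le_trans ?_ (dc_add hxy r)
  apply Nat.add_le_add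
  · exact (occ_app _ _ (by simp) r).trans (occ_dc _ _ _ r)
  · have : (A ++ x::y::B).reverse = B.reverse ++ (y::x::A.reverse) := by simp
    rw [this]
    exact (occ_app _ _ (by simp) r).trans (occ_dc _ _ _ r)

variable [Fintype V]

noncomputable def dg (w : Sym2 V → ℕ) (v : V) : ℕ := ∑ x, w s(v,x)

lemma dg_add (w w' : Sym2 V → ℕ) (v : V) : dg (fun e => w e + w' e) v = dg w v + dg w' v :=
  Finset.sum_add_distrib

lemma dg_single {x y : V} (h : x ≠ y) (v : V) :
    dg (fun e => if s(x,y) = e then 1 else 0) v =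
      (if v = x then 1 else 0) + (if v = y then 1 else 0) := by
  unfold dg
  by_cases h1 : v = x
  · subst h1
    simp only [Sym2.congr_right]
    simp [h]
  · by_cases h2 : v = y
    · subst h2
      have : ∀ z, (s(x,v) = s(v,z)) ↔ x = z := fun z => by
        rw [Sym2.eq_swap, Sym2.congr_right]
      simp only [this]
      simp [h1]
    · have : ∀ z, s(x,y) ≠ s(v,z) := by
        intro z hz
        rcases Sym2.eq_iff.1 hz with ⟨rfl, _⟩ | ⟨_, rfl⟩ <;> simp at h1 h2
      simp [h1, h2, this]

lemma Wk.parity {a b : V} {r : List V} (h : Wk a b r) (hc : r.IsChain (· ≠ ·)) (v : V) :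
    Even (dg (ec r) v + (if v = a then 1 else 0) + (if v = b then 1 else 0)) := by
  induction h with
  | nil a =>
    simp only [dg, ec, Finset.sum_const_zero, zero_add]
    exact ⟨_, rfl⟩
  | cons a h ih =>
    rename_i b c r
    have e1 : ec (a::r) = fun e => (if s(a,b) = e then 1 else 0) + ec r e :=
      funext fun e => ec_cons h e
    obtain ⟨l, rfl⟩ := h.exists_cons
    rw [List.isChain_cons_cons] at hc
    have ih := ih hc.2
    rw [e1, dg_add, dg_single hc.1]
    rw [Nat.even_iff] at *
    omega

lemma odd_walk (N : ℕ) : ∀ (u : Sym2 V → ℕ) (a b : V), (∑ e, u e) = N → a ≠ b →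
    (∀ x, u s(x,x) = 0) →
    (∀ v, Even (dg u v + (if v = a then 1 else 0) + (if v = b then 1 else 0))) →
    ∃ r, Wk a b r ∧ ∀ e, ec r e ≤ u e := by
  induction N with
  | zero =>
    intro u a b hN hab hl hp
    have hu : ∀ e, u e = 0 := by simpa using hN
    have := hp a
    simp [dg, hu, hab] at this
  | succ N ih =>
    intro u a b hN hab hl hp
    have h1 : dg u a ≠ 0 := by
      intro h; have := hp a; simp [h, hab] at this
    obtain ⟨x, -, hx⟩ := Finset.exists_ne_zero_of_sum_ne_zero h1
    have hxa : a ≠ x := by rintro rfl; exact hx (hl _)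
    by_cases hxb : x = b
    · subst hxb
      refine ⟨[a,x], Wk.cons _ (Wk.nil _), fun e => ?_⟩
      simp only [ec]
      split_ifs with h
      · subst h; omega
      · simp
    · let u' : Sym2 V → ℕ := fun e => u e - if s(a,x) = e then 1 else 0
      have huu : u = fun e => u' e + if s(a,x) = e then 1 else 0 := by
        funext e; simp only [u']; split_ifs with h
        · subst h; omega
        · simp
      have hs : ∑ e, u' e = N := by
        have h2 : ∑ e, u e = ∑ e, u' e + 1 := by
          conv_lhs => rw [huu]
          rw [Finset.sum_add_distrib]; simp
        omega
      obtain ⟨r, h1, h2⟩ := ih u' x b hs hxb (fun z => by simp [u', hl]) (fun v => by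
        have h3 := hp v
        rw [huu, dg_add, dg_single hxa] at h3
        rw [Nat.even_iff] at *
        omega)
      refine ⟨a::r, Wk.cons _ h1, fun e => ?_⟩
      rw [ec_cons h1, huu]
      have := h2 e
      simp only; omega

lemma Wk.sum_ec {a b : V} {r : List V} (h : Wk a b r) : ∑ e, ec r e + 1 = r.length := by
  induction h with
  | nil a => simp [ec]
  | cons a h ih =>
    simp only [ec_cons h, Finset.sum_add_distrib, List.length_cons, ← ih]
    simp; omega

lemma isChain_of_ec {w : Sym2 V → ℕ} : ∀ (r : List V), (∀ e, ec r e ≤ w e) →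
    r.IsChain (fun x y => 0 < w s(x,y))
  | [], _ => by simp
  | [_], _ => by simp
  | x::y::l, h => by
    rw [List.isChain_cons_cons]
    refine ⟨?_, isChain_of_ec (y::l) fun e => ?_⟩
    · have := h s(x,y); simp [ec] at this; omega
    · have := h e; simp only [ec] at this; omega

lemma euler (w : Sym2 V → ℕ) (hl : ∀ x, w s(x,x) = 0) (hp : ∀ v, Even (dg w v)) (s : V) :
    ∃ r, Wk s s r ∧ (∀ e, ec r e ≤ w e) ∧ ∀ v, Cn w s v → v ∈ r := by
  by_contra hcon
  have key : ∀ N, ∃ r, Wk s s r ∧ (∀ e, ec r e ≤ w e) ∧ N ≤ r.length := by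
    intro N
    induction N with
    | zero => exact ⟨[s], Wk.nil _, fun e => by simp [ec], by simp⟩
    | succ N ih =>
      obtain ⟨r, h1, h2, h3⟩ := ih
      have h4 : ∃ v, Cn w s v ∧ v ∉ r := by
        by_contra h; push Not at h; exact hcon ⟨r, h1, h2, h⟩
      have h5 : ∃ v x, v ∈ r ∧ 0 < w s(v,x) ∧ x ∉ r := by
        by_contra h; push Not at h
        obtain ⟨v, hv, hvr⟩ := h4
        apply hvr
        clear hvr
        induction hv with
        | refl => obtain ⟨l, rfl⟩ := h1.exists_cons; simp
        | tail _ hh ih => exact h _ _ ih hh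
      obtain ⟨v, x, hv, hw, hx⟩ := h5
      have h6 : ec r s(v,x) = 0 := by
        by_contra h; exact hx (Wk.mem_of_ec (Nat.pos_of_ne_zero h)).2
      have hvx : v ≠ x := by rintro rfl; exact hx hv
      have hch : r.IsChain (· ≠ ·) := by
        refine (isChain_of_ec r h2).imp ?_
        rintro a b hab rfl
        have := hl a; omega
      let u : Sym2 V → ℕ := fun e => w e - ec r e - if s(v,x) = e then 1 else 0
      have hu : w = fun e => (u e + if s(v,x) = e then 1 else 0) + ec r e := by
        funext e
        have := h2 e
        simp only [u]
        split_ifs with h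
        · subst h; omega
        · omega
      obtain ⟨q, hq1, hq2⟩ := odd_walk _ u x v rfl hvx.symm (fun z => by simp [u, hl]) (fun z => by
        have h7 := hp z
        have h8 := h1.parity hch z
        rw [hu, dg_add, dg_add, dg_single hvx] at h7
        rw [Nat.even_iff] at *
        omega)
      obtain ⟨A, B, rfl, hA, hB⟩ := h1.split hv
      have hq3 : Wk v v (v::q) := Wk.cons _ hq1
      obtain ⟨g1, g2⟩ := hA.append hq3
      obtain ⟨g3, g4⟩ := g1.append hB
      obtain ⟨-, g5⟩ := hA.append hB
      refine ⟨_, g3, fun e => ?_, ?_⟩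
      · rw [g4, g2, ec_cons hq1, hu]
        have := hq2 e
        simp only [g5]
        omega
      · obtain ⟨l, rfl⟩ := hq1.exists_cons
        simp at h3 ⊢; omega
  obtain ⟨r, h1, h2, h3⟩ := key (∑ e, w e + 2)
  have h4 := h1.sum_ec
  have h5 : ∑ e, ec r e ≤ ∑ e, w e := Finset.sum_le_sum fun e _ => h2 e
  omega

noncomputable def cost (L : Sym2 V → ℝ) (w : Sym2 V → ℕ) : ℝ := ∑ e, (w e : ℝ) * L e

lemma cost_add (L : Sym2 V → ℝ) (w w' : Sym2 V → ℕ) :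
    cost L (fun e => w e + w' e) = cost L w + cost L w' := by
  simp [cost, add_mul, Finset.sum_add_distrib]

lemma cost_ec (len : V → V → ℝ) (hs : ∀ x y, len x y = len y x) : ∀ r : List V,
    cost (Sym2.lift ⟨len, hs⟩) (ec r) = pathLen len r
  | [] => by simp [cost, ec, pathLen]
  | [_] => by simp [cost, ec, pathLen]
  | x::y::l => by
    have ih := cost_ec len hs (y::l)
    have : ec (x::y::l) = fun e => (if s(x,y) = e then 1 else 0) + ec (y::l) e := rfl
    rw [this, cost_add, ih, pathLen_cons2]
    congr 1
    simp [cost]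

lemma cost_mono (L : Sym2 V → ℝ) (w w' : Sym2 V → ℕ) (h : ∀ e, w' e ≤ w e)
    (hL : ∀ e, 0 < w e → 0 < L e) : cost L w' ≤ cost L w := by
  refine Finset.sum_le_sum fun e _ => ?_
  rcases Nat.eq_zero_or_pos (w e) with h0 | h0
  · have : w' e = 0 := by have := h e; omega
    simp [h0, this]
  · have : (w' e : ℝ) ≤ w e := by exact_mod_cast h e
    exact mul_le_mul_of_nonneg_right this (hL e h0).le

lemma cost_lt (L : Sym2 V → ℝ) (w w' : Sym2 V → ℕ) (h : ∀ e, w' e ≤ w e)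
    (hL : ∀ e, 0 < w e → 0 < L e) (e₀ : Sym2 V) (he : w' e₀ < w e₀) : cost L w' < cost L w := by
  refine Finset.sum_lt_sum (fun e _ => ?_) ⟨e₀, Finset.mem_univ _, ?_⟩
  · rcases Nat.eq_zero_or_pos (w e) with h0 | h0
    · have : w' e = 0 := by have := h e; omega
      simp [h0, this]
    · have : (w' e : ℝ) ≤ w e := by exact_mod_cast h e
      exact mul_le_mul_of_nonneg_right this (hL e h0).le
  · have : (w' e₀ : ℝ) < w e₀ := by exact_mod_cast he
    exact mul_lt_mul_of_pos_right this (hL e₀ (by omega))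

noncomputable def I1 {α : Type*} (a b : α) : ℕ := if a = b then 1 else 0

lemma I1_self {α : Type*} (a : α) : I1 a a = 1 := by simp [I1]

lemma I1_ne {α : Type*} {a b : α} (h : a ≠ b) : I1 a b = 0 := by simp [I1, h]

lemma dg_single' {x y : V} (h : x ≠ y) (v : V) :
    dg (fun e => I1 s(x,y) e) v = I1 v x + I1 v y := by
  unfold I1; convert dg_single h v

lemma Wk.parity' {a b : V} {r : List V} (h : Wk a b r) (hc : r.IsChain (· ≠ ·)) (v : V) :
    Even (dg (ec r) v + I1 v a + I1 v b) := h.parity hc v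

lemma cost_I1 (L : Sym2 V → ℝ) (e : Sym2 V) : cost L (fun e' => I1 e e') = L e := by
  simp [cost, I1]

end Gen

section Spec
open Classical

lemma subPath_get (i : Fin n) (j : Fin 2) (p : ℕ) (hp : p < m i j + 1) :
    (subPath (m := m) i j)[p+1]? = some (pk i j ⟨p, hp⟩) := by
  unfold subPath
  rw [List.getElem?_cons_succ, List.getElem?_append_left (by simpa using hp)]
  simp [hp, -List.ofFn_succ]

lemma subPath_get0 (i : Fin n) (j : Fin 2) :
    (subPath (m := m) i j)[0]? = some (art i j.castSucc) := by
  simp [subPath]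

lemma subPath_getl (i : Fin n) (j : Fin 2) :
    (subPath (m := m) i j)[m i j + 2]? = some (art i j.succ) := by
  unfold subPath
  rw [List.getElem?_cons_succ, List.getElem?_append_right (by simp)]
  simp

lemma subPath_length (i : Fin n) (j : Fin 2) : (subPath (m := m) i j).length = m i j + 3 := by
  simp [subPath]

lemma subPath_wk (i : Fin n) (j : Fin 2) :
    Wk (art i j.castSucc) (art i j.succ) (subPath (m := m) i j) := by
  apply wk_of
  · simp [subPath]
  · unfold subPath
    rw [← List.cons_append, List.getLast?_append]; simp

lemma subPath_nodup (i : Fin n) (j : Fin 2) : (subPath (m := m) i j).Nodup := by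
  unfold subPath
  rw [List.nodup_cons, List.nodup_append]
  refine ⟨?_, ?_, ?_, ?_⟩
  · simp [art, pk, Fin.ext_iff]
  · rw [List.nodup_ofFn]
    intro a b h
    simpa [pk] using h
  · simp
  · intro a ha b hb
    simp [-List.ofFn_succ] at ha hb
    obtain ⟨t, rfl⟩ := ha
    subst hb
    simp [art, pk]

lemma pk_mem_subPath {i i' : Fin n} {j j' : Fin 2} {t} (h : pk i' j' t ∈ subPath (m := m) i j) :
    i' = i ∧ j' = j := by
  simp only [subPath, List.mem_cons, List.mem_append, List.mem_ofFn, List.not_mem_nil, or_false] at h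
  rcases h with h | ⟨t', h⟩ | h
  · simp [art, pk] at h
  · simp only [pk, Sum.inr.injEq, Sigma.mk.injEq] at h
    obtain ⟨rfl, h⟩ := h
    simp only [heq_eq_eq, Sigma.mk.injEq] at h
    exact ⟨rfl, h.1.symm⟩
  · simp [art, pk] at h

lemma adjIn_iff_app {α : Type*} (l : List α) (x y : α) :
    adjIn l x y ↔ ∃ A B, l = A ++ x::y::B := by
  constructor
  · rintro ⟨p, h1, h2⟩
    refine ⟨l.take p, l.drop (p+2), ?_⟩
    obtain ⟨a1, rfl⟩ := List.getElem?_eq_some_iff.1 h1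
    obtain ⟨a2, rfl⟩ := List.getElem?_eq_some_iff.1 h2
    rw [← List.drop_eq_getElem_cons, ← List.drop_eq_getElem_cons, List.take_append_drop]
  · rintro ⟨A, B, rfl⟩
    exact ⟨A.length, by simp, by simp⟩

lemma ec_pos_iff {α : Type*} (l : List α) (x y : α) :
    0 < ec l s(x,y) ↔ adjIn l x y ∨ adjIn l y x := by
  rw [adjIn_iff_app, adjIn_iff_app]
  constructor
  · intro h
    obtain ⟨A, x', y', B, h1, h2⟩ := ec_mem _ _ h
    rcases Sym2.eq_iff.1 h2 with ⟨rfl, rfl⟩ | ⟨rfl, rfl⟩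
    · exact Or.inl ⟨A, B, h1⟩
    · exact Or.inr ⟨A, B, h1⟩
  · rintro (⟨A, B, rfl⟩ | ⟨A, B, rfl⟩)
    · exact ec_pos_of _ _ _ _
    · rw [Sym2.eq_swap]; exact ec_pos_of _ _ _ _

lemma adj_of_ec {i : Fin n} {j : Fin 2} {x y : TBV n m} (h : 0 < ec (subPath i j) s(x,y)) :
    Adj x y := Or.inr ⟨i, j, (ec_pos_iff _ _ _).1 h⟩

lemma adj_symm {x y : TBV n m} (h : Adj x y) : Adj y x := by
  rcases h with ⟨i, i', j, h, h'⟩ | ⟨i, j, h⟩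
  · exact Or.inl ⟨i, i', j, h, by tauto⟩
  · exact Or.inr ⟨i, j, h.symm⟩

lemma adjIn_sub {i : Fin n} {j : Fin 2} {x y : TBV n m} (h : adjIn (subPath i j) x y) :
    (x = art i j.castSucc ∧ y = pk i j 0) ∨ (x = pk i j (Fin.last _) ∧ y = art i j.succ) ∨
    ∃ t t', t ≠ t' ∧ x = pk i j t ∧ y = pk i j t' := by
  obtain ⟨p, h1, h2⟩ := h
  have hl := (List.getElem?_eq_some_iff.1 h2).1
  rw [subPath_length] at hl
  rcases p with _ | p
  · left
    rw [subPath_get0] at h1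
    rw [subPath_get i j 0 (by omega)] at h2
    simp at h1 h2
    exact ⟨h1.symm, h2.symm⟩
  · right
    rw [subPath_get i j p (by omega)] at h1
    by_cases hp : p = m i j
    · left
      subst hp
      rw [subPath_getl] at h2
      simp at h1 h2
      exact ⟨h1.symm, h2.symm⟩
    · right
      rw [subPath_get i j (p+1) (by omega)] at h2
      simp at h1 h2
      exact ⟨_, _, by simp [Fin.ext_iff], h1.symm, h2.symm⟩

lemma adj_irrefl (x : TBV n m) : ¬ Adj x x := by
  rintro (⟨i, i', j, h, h'⟩ | ⟨i, j, h⟩)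
  · have : i = i' := by
      rcases h' with ⟨rfl, h'⟩ | ⟨rfl, h'⟩ <;> simp [art] at h'
      · exact h'
      · exact h'.symm
    subst this; omega
  · rw [or_self] at h
    rcases adjIn_sub h with ⟨rfl, h⟩ | ⟨rfl, h⟩ | ⟨t, t', ht, rfl, h⟩
    · simp [art, pk] at h
    · simp [art, pk] at h
    · simp [pk] at h; exact ht h

lemma ec_sub_pick {i : Fin n} {j : Fin 2} {e : Sym2 (TBV n m)} (h : 0 < ec (subPath i j) e) :
    ∃ t, pk i j t ∈ e := by
  induction e using Sym2.ind with
  | _ x y =>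
  rcases (ec_pos_iff _ _ _).1 h with h | h <;>
  rcases adjIn_sub h with ⟨rfl, rfl⟩ | ⟨rfl, rfl⟩ | ⟨t, t', ht, rfl, rfl⟩ <;>
  exact ⟨_, by simp; first | exact Or.inl rfl | exact Or.inr rfl⟩

lemma ec_sub_disj {i i' : Fin n} {j j' : Fin 2} {e : Sym2 (TBV n m)}
    (h : 0 < ec (subPath i j) e) (h' : 0 < ec (subPath i' j') e) : i = i' ∧ j = j' := by
  obtain ⟨t, ht⟩ := ec_sub_pick h
  induction e using Sym2.ind with
  | _ x y =>
  have := Wk.mem_of_ec h'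
  simp at ht
  apply pk_mem_subPath (t := t)
  rcases ht with ht | ht
  · rw [ht]; exact this.1
  · rw [ht]; exact this.2

lemma ec_sub_art {i a b : Fin n} {j : Fin 2} {c d : Fin 3} :
    ec (subPath (m := m) i j) s(art a c, art b d) = 0 := by
  by_contra h
  obtain ⟨t, ht⟩ := ec_sub_pick (Nat.pos_of_ne_zero h)
  simp [art, pk] at ht

def nb (k k' : Fin n) : Prop := (k' : ℕ) = k + 1 ∨ (k : ℕ) = k' + 1

lemma nb.ne {k k' : Fin n} (h : nb k k') : k ≠ k' := by
  rintro rfl; rcases h with h | h <;> omega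

lemma nb.adj {k k' : Fin n} (h : nb k k') (j : Fin 3) : Adj (art (m := m) k j) (art k' j) := by
  rcases h with h | h
  · exact Or.inl ⟨k, k', j, h, Or.inl ⟨rfl, rfl⟩⟩
  · exact Or.inl ⟨k', k, j, h, Or.inr ⟨rfl, rfl⟩⟩

def outer (j : Fin 2) : Fin 3 := if j = 0 then 0 else 2

lemma outer_ne (j : Fin 2) : outer j ≠ 1 := by
  fin_cases j <;> simp [outer]

lemma outer_nb (k : Fin n) (j : Fin 2) : ∃ p : TBV n m, p ≠ art k (outer j) ∧
    0 < ec (subPath k j) s(art k (outer j), p) ∧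
    ∀ y, Adj (art k (outer j)) y → y = p ∨ ∃ k', nb k k' ∧ y = art k' (outer j) := by
  have h0 : ∀ y : TBV n m, Adj (art k (outer j)) y → (∃ k', nb k k' ∧ y = art k' (outer j)) ∨
      ∃ j', (outer j = j'.castSucc ∧ y = pk k j' 0) ∨
        (outer j = j'.succ ∧ y = pk k j' (Fin.last _)) := by
    rintro y (⟨i, i', j', h, h'⟩ | ⟨i, j', h⟩)
    · left
      rcases h' with ⟨h1, rfl⟩ | ⟨h1, rfl⟩ <;> simp [art] at h1
      · obtain ⟨rfl, rfl⟩ := h1; exact ⟨i', Or.inl h, rfl⟩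
      · obtain ⟨rfl, rfl⟩ := h1; exact ⟨i, Or.inr h, rfl⟩
    · right
      rcases h with h | h <;>
        rcases adjIn_sub h with ⟨h1, h2⟩ | ⟨h1, h2⟩ | ⟨t, t', ht, h1, h2⟩
      · simp [art] at h1; obtain ⟨rfl, h1⟩ := h1; exact ⟨j', Or.inl ⟨h1, h2⟩⟩
      · simp [art, pk] at h1
      · simp [art, pk] at h1
      · simp [art, pk] at h2
      · simp [art] at h2; obtain ⟨rfl, h2⟩ := h2; exact ⟨j', Or.inr ⟨h2, h1⟩⟩
      · simp [art, pk] at h2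
  have hj : j = 0 ∨ j = 1 := by omega
  rcases hj with rfl | rfl
  · refine ⟨pk k 0 0, by simp [art, pk], ?_, fun y hy => ?_⟩
    · rw [ec_pos_iff]; left
      exact ⟨0, subPath_get0 _ _, subPath_get k 0 0 (by omega)⟩
    · rcases h0 y hy with h | ⟨j', ⟨h1, h2⟩ | ⟨h1, h2⟩⟩
      · exact Or.inr h
      · have : j' = 0 := by
          have hj : j' = 0 ∨ j' = 1 := by omega
          rcases hj with rfl | rfl
          · rfl
          · simp [outer] at h1
        subst this
        exact Or.inl h2
      · exact absurd h1.symm (by simp [outer])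
  · refine ⟨pk k 1 (Fin.last _), by simp [art, pk], ?_, fun y hy => ?_⟩
    · rw [ec_pos_iff]; right
      exact ⟨m k 1 + 1, subPath_get k 1 (m k 1) (by omega), subPath_getl k 1⟩
    · rcases h0 y hy with h | ⟨j', ⟨h1, h2⟩ | ⟨h1, h2⟩⟩
      · exact Or.inr h
      · exfalso
        simp [outer, Fin.ext_iff] at h1; omega
      · have : j' = 1 := by
          have hj : j' = 0 ∨ j' = 1 := by omega
          rcases hj with rfl | rfl
          · simp [outer] at h1
          · rfl
        subst this
        exact Or.inl h2

lemma sub_chain (i : Fin n) (j : Fin 2) : (subPath (m := m) i j).IsChain (· ≠ ·) :=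
  (subPath_nodup i j).isChain

lemma sub_parity (k : Fin n) (j : Fin 2) (v : TBV n m) :
    Even (dg (ec (subPath k j)) v + I1 v (art k (outer j)) + I1 v (art k 1)) := by
  have h := (subPath_wk (m := m) k j).parity' (sub_chain k j) v
  have hj : j = 0 ∨ j = 1 := by omega
  rcases hj with rfl | rfl
  · exact h
  · rw [add_right_comm]; exact h

lemma sub_cn {w : Sym2 (TBV n m) → ℕ} (k : Fin n) (j : Fin 2)
    (h : ∀ e, 0 < ec (subPath k j) e → 0 < w e) : Cn w (art k (outer j)) (art k 1) := by
  have h := (subPath_wk (m := m) k j).cn h _ (subPath_wk k j).last_mem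
  have hj : j = 0 ∨ j = 1 := by omega
  rcases hj with rfl | rfl
  · exact h
  · exact h.symm

lemma dg_congr {V : Type*} [Fintype V] {w w' : Sym2 V → ℕ} (h : ∀ e, w' e % 2 = w e % 2) (v : V)
    (he : Even (dg w v)) : Even (dg w' v) := by
  rw [Nat.even_iff] at *
  unfold dg at *
  rw [Finset.sum_nat_mod] at *
  simp only [h]; exact he

end Spec

section Opt
open Classical
variable {n : ℕ} {m : Fin (n+1) → Fin 2 → ℕ}

structure Feas (VR : Set (TBV (n+1) m)) (w : Sym2 (TBV (n+1) m) → ℕ) : Prop where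
  adj : ∀ x y, 0 < w s(x,y) → Adj x y
  even : ∀ v, Even (dg w v)
  conn : ∀ v ∈ VR, Cn w (art 0 0) v

noncomputable def Dset (w : Sym2 (TBV (n+1) m) → ℕ) : Finset (Fin (n+1) × Fin 2) :=
  Finset.univ.filter fun p => p ≠ (0,0) ∧ ∀ e, 0 < ec (subPath p.1 p.2) e → 2 ≤ w e

lemma mem_Dset {w : Sym2 (TBV (n+1) m) → ℕ} {p : Fin (n+1) × Fin 2} :
    p ∈ Dset w ↔ p ≠ (0,0) ∧ ∀ e, 0 < ec (subPath p.1 p.2) e → 2 ≤ w e := by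
  simp [Dset]

def Opt (L : Sym2 (TBV (n+1) m) → ℝ) (VR : Set (TBV (n+1) m))
    (w : Sym2 (TBV (n+1) m) → ℕ) : Prop :=
  Feas VR w ∧ ∀ w', Feas VR w' → cost L w ≤ cost L w'

def Good (L : Sym2 (TBV (n+1) m) → ℝ) (VR : Set (TBV (n+1) m))
    (w : Sym2 (TBV (n+1) m) → ℕ) : Prop :=
  Opt L VR w ∧ ∀ w', Opt L VR w' → (Dset w).card ≤ (Dset w').card

noncomputable def nm (w : Sym2 (TBV (n+1) m) → ℕ) : Sym2 (TBV (n+1) m) → ℕ :=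
  fun e => if w e = 0 then 0 else if w e % 2 = 0 then 2 else 1

variable {L : Sym2 (TBV (n+1) m) → ℝ} {VR : Set (TBV (n+1) m)} {w : Sym2 (TBV (n+1) m) → ℕ}

lemma nm_le (e) : nm w e ≤ w e := by unfold nm; split_ifs <;> omega
lemma nm_le2 (e) : nm w e ≤ 2 := by unfold nm; split_ifs <;> omega

lemma nm_feas (h : Feas VR w) : Feas VR (nm w) where
  adj x y hxy := h.adj x y (hxy.trans_le (nm_le _))
  even v := dg_congr (fun e => by unfold nm; split_ifs <;> omega) v (h.even v)
  conn v hv := Cn.map (w := w) (w' := nm w) id (fun x y hxy => Cn.of_edge (by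
    unfold nm; simp only [id]; split_ifs <;> omega)) (h.conn v hv)

lemma posL (hL : ∀ x y, Adj x y → 0 < L s(x,y)) (h : Feas VR w) (e) (he : 0 < w e) : 0 < L e := by
  induction e using Sym2.ind with
  | _ x y => exact hL x y (h.adj x y he)

lemma Opt.le2 (hL : ∀ x y, Adj x y → 0 < L s(x,y)) (h : Opt L VR w) (e) : w e ≤ 2 := by
  by_contra hc
  have h1 := h.2 _ (nm_feas h.1)
  have h2 := cost_lt L w (nm w) nm_le (posL hL h.1) e (by have := nm_le2 (w := w) e; omega)
  linarith

lemma flip (hL : ∀ x y, Adj x y → 0 < L s(x,y)) (d : ℝ)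
    (hcr : ∀ k k', nb k k' → ∀ j j', L s(art k j, art k' j) = L s(art k j', art k' j'))
    (hv : ∀ i j, cost L (ec (subPath i j)) = d)
    (hG : Good L VR w) {k k' : Fin (n+1)} {j : Fin 2} (hk : nb k k') (hD : (k,j) ∈ Dset w)
    (ho : 1 ≤ w s(art k (outer j), art k' (outer j))) :
    ∃ w', Good L VR w' ∧ (k',j) ∈ Dset w' ∧
      w' s(art k (outer j), art k' (outer j)) + 1 = w s(art k (outer j), art k' (outer j)) := by
  set o := outer j with hoj
  have ho1 : o ≠ 1 := outer_ne j
  have hD' := mem_Dset.1 hD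
  simp only at hD'
  let P : Sym2 (TBV (n+1) m) → ℕ := ec (subPath k j)
  let P' : Sym2 (TBV (n+1) m) → ℕ := ec (subPath k' j)
  let O : Sym2 (TBV (n+1) m) → ℕ := fun e => I1 s(art k o, art k' o) e
  let M : Sym2 (TBV (n+1) m) → ℕ := fun e => I1 s(art k 1, art k' 1) e
  have hO : ∀ e, O e = 0 ∨ O e = 1 ∧ e = s(art k o, art k' o) := fun e => by
    by_cases h : s(art k o, art k' o) = e
    · exact Or.inr ⟨by rw [← h]; exact I1_self _, h.symm⟩
    · exact Or.inl (I1_ne h)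
  have hM : ∀ e, M e = 0 ∨ M e = 1 ∧ e = s(art k 1, art k' 1) := fun e => by
    by_cases h : s(art k 1, art k' 1) = e
    · exact Or.inr ⟨by rw [← h]; exact I1_self _, h.symm⟩
    · exact Or.inl (I1_ne h)
  have hP1 : ∀ e, P e ≤ 1 := ec_le_one _ (subPath_nodup k j)
  have hsO : ∀ i j' e, 0 < ec (subPath i j') e → O e = 0 := fun i j' e he => by
    rcases hO e with h | ⟨-, rfl⟩
    · exact h
    · rw [ec_sub_art] at he; omega
  have hsM : ∀ i j' e, 0 < ec (subPath i j') e → M e = 0 := fun i j' e he => by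
    rcases hM e with h | ⟨-, rfl⟩
    · exact h
    · rw [ec_sub_art] at he; omega
  have hPP : ∀ e, 0 < P e → P' e = 0 := fun e he => by
    by_contra h
    exact hk.ne (ec_sub_disj he (Nat.pos_of_ne_zero h)).1
  have hOM : ∀ e, O e = 0 ∨ M e = 0 := fun e => by
    rcases hO e with h | ⟨-, rfl⟩
    · exact Or.inl h
    · right
      apply I1_ne
      simp [art, ho1.symm]
  have hOw : ∀ e, O e ≤ w e := fun e => by
    rcases hO e with h | ⟨h, rfl⟩ <;> omega
  let w' : Sym2 (TBV (n+1) m) → ℕ := fun e => w e + M e + P' e - O e - P e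
  have hw : ∀ e, w' e + O e + P e = w e + M e + P' e := fun e => by
    simp only [w']
    have a1 := hOw e
    have a2 := hP1 e
    rcases Nat.eq_zero_or_pos (P e) with h | h
    · omega
    · have := hD'.2 e h
      have := hsO k j e h
      omega
  have hww : (fun e => (w' e + O e) + P e) = fun e => (w e + M e) + P' e := funext hw
  have hle2 := hG.1.le2 hL
  have hPpos : ∀ e, 0 < P e → 0 < w' e := fun e he => by
    have := hw e; have := hD'.2 e he; have := hsO k j e he; have := hP1 e; omega
  have hP'pos : ∀ e, 0 < P' e → 0 < w' e := fun e he => by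
    have := hw e; have := hsO k' j e he; have := hPP e
    rcases Nat.eq_zero_or_pos (P e) with h | h <;> omega
  have hMpos : 0 < w' s(art k 1, art k' 1) := by
    have h1 := hw s(art k 1, art k' 1)
    have h2 : P s(art k 1, art k' 1) = 0 := ec_sub_art
    have h3 : M s(art k 1, art k' 1) = 1 := I1_self _
    have := hOM s(art k 1, art k' 1)
    omega
  have hconn : ∀ x y, 0 < w s(x,y) → Cn w' x y := by
    intro x y hxy
    rcases hO s(x,y) with h | ⟨h, he⟩
    · apply Cn.of_edge
      by_cases hP : 0 < P s(x,y)
      · exact hPpos _ hP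
      · have := hw s(x,y); omega
    · have c1 : Cn w' (art k o) (art k 1) := sub_cn k j hPpos
      have c2 : Cn w' (art k' o) (art k' 1) := sub_cn k' j hP'pos
      have c3 : Cn w' (art k 1) (art k' 1) := Cn.of_edge hMpos
      have c4 : Cn w' (art k o) (art k' o) := (c1.trans c3).trans c2.symm
      rcases Sym2.eq_iff.1 he with ⟨rfl, rfl⟩ | ⟨rfl, rfl⟩
      · exact c4
      · exact c4.symm
  have hart : ∀ r : Fin 3, (art k r : TBV (n+1) m) ≠ art k' r := fun r => by
    simp [art, hk.ne]
  have hfeas : Feas VR w' := by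
    refine ⟨fun x y hxy => ?_, fun v => ?_, fun v hv => ?_⟩
    · have h1 := hw s(x,y)
      by_cases h2 : 0 < w s(x,y)
      · exact hG.1.1.adj x y h2
      · by_cases h3 : 0 < P' s(x,y)
        · exact adj_of_ec h3
        · rcases hM s(x,y) with h | ⟨h, he⟩
          · omega
          · rcases Sym2.eq_iff.1 he with ⟨rfl, rfl⟩ | ⟨rfl, rfl⟩
            · exact hk.adj _
            · exact adj_symm (hk.adj _)
    · have h1 := congrArg (fun f => dg f v) hww
      simp only [dg_add] at h1
      have h2 : dg O v = _ := dg_single' (hart o) v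
      have h3 : dg M v = _ := dg_single' (hart 1) v
      have h4 := sub_parity k j v
      have h5 := sub_parity k' j v
      have h6 := hG.1.1.even v
      rw [Nat.even_iff] at *
      simp only [P, P'] at h1
      rw [← hoj] at h4 h5
      omega
    · exact (Cn.map (w := w) (w' := w') id hconn (hG.1.1.conn v hv))
  have hcost : cost L w' = cost L w := by
    have h1 := congrArg (fun f => cost L f) hww
    simp only [cost_add] at h1
    have h2 : cost L O = L s(art k o, art k' o) := cost_I1 _ _
    have h3 : cost L M = L s(art k 1, art k' 1) := cost_I1 _ _
    have h4 := hcr k k' hk o 1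
    have h5 : cost L P = d := hv k j
    have h6 : cost L P' = d := hv k' j
    linarith
  have hopt : Opt L VR w' := ⟨hfeas, fun u hu => by rw [hcost]; exact hG.1.2 u hu⟩
  have hsub : ∀ p ∈ Dset w', p ≠ (k',j) → p ∈ (Dset w).erase (k,j) := by
    rintro ⟨i, j'⟩ hp hne
    have hp := mem_Dset.1 hp
    simp only at hp
    rw [Finset.mem_erase]
    constructor
    · rintro h
      simp only [Prod.mk.injEq] at h
      obtain ⟨rfl, rfl⟩ := h
      obtain ⟨q, -, hq, -⟩ := outer_nb (m := m) i j'
      have := hp.2 _ hq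
      have := hw s(art i (outer j'), q)
      have := hPP _ hq
      have := hsM _ _ _ hq
      have := hle2 s(art i (outer j'), q)
      have : 0 < P s(art i (outer j'), q) := hq
      omega
    · rw [mem_Dset]
      refine ⟨hp.1, fun e he => ?_⟩
      have h1 := hp.2 e he
      have h2 := hw e
      have h3 := hsM _ _ _ he
      have h4 : P' e = 0 := by
        by_contra h
        obtain ⟨rfl, rfl⟩ := ec_sub_disj he (Nat.pos_of_ne_zero h)
        exact hne rfl
      omega
  have hcardE := Finset.card_erase_add_one hD
  have hmem : (k',j) ∈ Dset w' := by
    by_contra hn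
    have h1 : Dset w' ⊆ (Dset w).erase (k,j) := fun p hp =>
      hsub p hp (by rintro rfl; exact hn hp)
    have h2 := Finset.card_le_card h1
    have h3 := hG.2 w' hopt
    omega
  have hcard : (Dset w').card ≤ (Dset w).card := by
    have h1 : Dset w' ⊆ insert (k',j) ((Dset w).erase (k,j)) := fun p hp => by
      by_cases h : p = (k',j)
      · simp [h]
      · exact Finset.mem_insert_of_mem (hsub p hp h)
    have h2 := Finset.card_le_card h1
    have h3 := Finset.card_insert_le (k',j) ((Dset w).erase (k,j))
    omega
  refine ⟨w', ⟨hopt, fun u hu => hcard.trans (hG.2 u hu)⟩, hmem, ?_⟩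
  have h1 := hw s(art k o, art k' o)
  have h2 : P s(art k o, art k' o) = 0 := ec_sub_art
  have h3 : P' s(art k o, art k' o) = 0 := ec_sub_art
  have h4 : O s(art k o, art k' o) = 1 := I1_self _
  have := hOM s(art k o, art k' o)
  omega

/-- dead end at the outer end of a double subaisle contradicts optimality -/
lemma deadend (hL : ∀ x y, Adj x y → 0 < L s(x,y)) (hVR : ∀ v ∈ VR, IsPick v)
    (hG : Opt L VR w) {k : Fin (n+1)} {j : Fin 2} (hD : (k,j) ∈ Dset w)
    (h0 : ∀ k', nb k k' → w s(art k (outer j), art k' (outer j)) = 0) : False := by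
  obtain ⟨p, hp0, hp1, hp2⟩ := outer_nb (m := m) k j
  set v := (art k (outer j) : TBV (n+1) m) with hvdef
  have hD' := mem_Dset.1 hD
  simp only at hD'
  have hwp : w s(v,p) = 2 := le_antisymm (hG.le2 hL _) (hD'.2 _ hp1)
  have honly : ∀ y, 0 < w s(v,y) → y = p := fun y hy => by
    rcases hp2 y (hG.1.adj _ _ hy) with h | ⟨k', h, rfl⟩
    · exact h
    · rw [h0 k' h] at hy; omega
  let w' : Sym2 (TBV (n+1) m) → ℕ := fun e => if e = s(v,p) then 0 else w e
  have hle : ∀ e, w' e ≤ w e := fun e => by simp only [w']; split_ifs <;> omega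
  have hs : (art 0 0 : TBV (n+1) m) ≠ v := by
    intro h
    simp only [hvdef, art, Sum.inl.injEq, Prod.mk.injEq] at h
    obtain ⟨rfl, h⟩ := h
    apply hD'.1
    have hj : j = 0 ∨ j = 1 := by omega
    rcases hj with rfl | rfl
    · rfl
    · simp [outer] at h
  have hf : Feas VR w' := by
    refine ⟨fun x y h => hG.1.adj x y (h.trans_le (hle _)), fun u => ?_, fun u hu => ?_⟩
    · refine dg_congr (fun e => ?_) u (hG.1.even u)
      simp only [w']; split_ifs with h
      · rw [h, hwp]
      · rfl
    · have huv : u ≠ v := by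
        obtain ⟨i, j', t, rfl⟩ := hVR u hu
        simp [hvdef, art, pk]
      have := Cn.map (w := w) (w' := w') (fun x => if x = v then p else x) (fun x y hxy => by
        by_cases hx : x = v
        · subst hx
          have := honly y hxy
          subst this
          simp [hp0]
          exact Relation.ReflTransGen.refl
        · by_cases hy : y = v
          · subst hy
            rw [Sym2.eq_swap] at hxy
            have := honly x hxy
            subst this
            simp [hp0]
            exact Relation.ReflTransGen.refl
          · simp only [hx, hy, if_false]
            apply Cn.of_edge
            simp only [w']
            rw [if_neg]
            · exact hxy
            · intro h
              rcases Sym2.eq_iff.1 h with ⟨h, -⟩ | ⟨-, h⟩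
              · exact hx h
              · exact hy h) (hG.1.conn u hu)
      simpa [hs, huv] using this
  have h1 := hG.2 _ hf
  have h2 := cost_lt L w w' hle (posL hL hG.1) s(v,p) (by simp [w', hwp])
  linarith

lemma lemR (hL : ∀ x y, Adj x y → 0 < L s(x,y)) (d : ℝ)
    (hcr : ∀ k k', nb k k' → ∀ j j', L s(art k j, art k' j) = L s(art k j', art k' j'))
    (hv : ∀ i j, cost L (ec (subPath i j)) = d) (hVR : ∀ v ∈ VR, IsPick v) (N : ℕ) :
    ∀ (w : Sym2 (TBV (n+1) m) → ℕ) (k : Fin (n+1)) (j : Fin 2), n - (k:ℕ) = N →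
      Good L VR w → (k,j) ∈ Dset w →
      (∀ k' : Fin (n+1), (k : ℕ) = k' + 1 → w s(art k (outer j), art k' (outer j)) ≤ 1) →
      False := by
  induction N using Nat.strong_induction_on with
  | _ N ih =>
  intro w k j hN hG hD hleft
  by_cases hr : ∃ k' : Fin (n+1), (k' : ℕ) = k + 1 ∧ 1 ≤ w s(art k (outer j), art k' (outer j))
  · obtain ⟨k', hk, ho⟩ := hr
    obtain ⟨w', hG', hD', hw'⟩ := flip hL d hcr hv hG (Or.inl hk) hD ho
    have := k'.isLt
    refine ih (n - k') (by omega) w' k' j rfl hG' hD' fun k'' hk'' => ?_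
    have : k'' = k := by ext; omega
    subst this
    have h2 := hG.1.le2 hL s(art k'' (outer j), art k' (outer j))
    rw [Sym2.eq_swap]
    omega
  · push Not at hr
    refine deadend hL hVR hG.1 hD fun k' hk' => ?_
    rcases hk' with hk' | hk'
    · have := hr k' hk'; omega
    · by_contra hne
      have h1 : w s(art k (outer j), art k' (outer j)) = 1 := by
        have := hleft k' hk'; omega
      obtain ⟨p, hp0, hp1, hp2⟩ := outer_nb (m := m) k j
      have hD' := mem_Dset.1 hD
      simp only at hD'
      have hwp : w s(art k (outer j),p) = 2 := le_antisymm (hG.1.le2 hL _) (hD'.2 _ hp1)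
      have hev := hG.1.1.even (art k (outer j))
      unfold dg at hev
      rw [Finset.sum_eq_add (a := p) (b := art k' (outer j))] at hev
      · rw [hwp, h1] at hev
        exact absurd hev (by decide)
      · rintro rfl; omega
      · rintro c - ⟨hc1, hc2⟩
        by_contra hc
        rcases hp2 c (hG.1.1.adj _ _ (Nat.pos_of_ne_zero hc)) with h | ⟨k'', h | h, rfl⟩
        · exact hc1 h
        · have := hr k'' h; omega
        · apply hc2
          have : k'' = k' := by ext; omega
          rw [this]
      · simp
      · simp

lemma lemL (hL : ∀ x y, Adj x y → 0 < L s(x,y)) (d : ℝ)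
    (hcr : ∀ k k', nb k k' → ∀ j j', L s(art k j, art k' j) = L s(art k j', art k' j'))
    (hv : ∀ i j, cost L (ec (subPath i j)) = d) (hVR : ∀ v ∈ VR, IsPick v) (N : ℕ) :
    ∀ (w : Sym2 (TBV (n+1) m) → ℕ) (k : Fin (n+1)) (j : Fin 2), (k:ℕ) = N →
      Good L VR w → (k,j) ∈ Dset w → False := by
  induction N using Nat.strong_induction_on with
  | _ N ih =>
  intro w k j hN hG hD
  by_cases hr : ∃ k' : Fin (n+1), (k : ℕ) = k' + 1 ∧ 1 ≤ w s(art k (outer j), art k' (outer j))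
  · obtain ⟨k', hk, ho⟩ := hr
    obtain ⟨w', hG', hD', hw'⟩ := flip hL d hcr hv hG (Or.inr hk) hD ho
    exact ih k' (by omega) w' k' j rfl hG' hD'
  · push Not at hr
    refine lemR hL d hcr hv hVR _ w k j rfl hG hD fun k' hk' => ?_
    have := hr k' hk'; omega

lemma exists_feas (hVR : ∀ v ∈ VR, IsPick v) : ∃ w, Feas VR w := by
  refine ⟨fun e => if ∃ x y, e = s(x,y) ∧ Adj x y then 2 else 0, fun x y h => ?_, fun v => ?_,
    fun v hv => ?_⟩
  · split_ifs at h with h'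
    · obtain ⟨x', y', h1, h2⟩ := h'
      rcases Sym2.eq_iff.1 h1 with ⟨rfl, rfl⟩ | ⟨rfl, rfl⟩
      · exact h2
      · exact adj_symm h2
    · omega
  · refine dg_congr (w := fun _ => 0) (fun e => ?_) v (by simp [dg])
    split_ifs <;> simp
  · set w : Sym2 (TBV (n+1) m) → ℕ := fun e => if ∃ x y, e = s(x,y) ∧ Adj x y then 2 else 0
    have hadj : ∀ x y, Adj x y → 0 < w s(x,y) := fun x y h => by
      simp only [w]; rw [if_pos ⟨x, y, rfl, h⟩]; omega
    have hsub : ∀ i j e, 0 < ec (subPath i j) e → 0 < w e := by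
      intro i j e he
      induction e using Sym2.ind with
      | _ x y => exact hadj x y (adj_of_ec he)
    have hrow : ∀ (N : ℕ) (i : Fin (n+1)), (i : ℕ) = N → Cn w (art 0 0) (art i 0) := by
      intro N
      induction N with
      | zero =>
        intro i hi
        have : i = 0 := by ext; simpa using hi
        subst this
        exact Relation.ReflTransGen.refl
      | succ N ih =>
        intro i hi
        have h1 := ih ⟨N, by omega⟩ rfl
        refine h1.trans (Cn.of_edge (hadj _ _ (nb.adj (Or.inl hi) 0)))
    obtain ⟨i, j, t, rfl⟩ := hVR v hv
    have hmem : ∀ j t, pk i j t ∈ subPath (m := m) i j := fun j t => by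
      simp [subPath, -List.ofFn_succ]
    have h0 := hrow _ i rfl
    have hj : j = 0 ∨ j = 1 := by omega
    rcases hj with rfl | rfl
    · exact h0.trans ((subPath_wk i 0).cn (hsub i 0) _ (hmem 0 t))
    · have h1 : Cn w (art i 0) (art i 1) := sub_cn i 0 (hsub i 0)
      exact (h0.trans h1).trans ((subPath_wk i 1).cn (hsub i 1) _ (hmem 1 t))

lemma exists_good (hL : ∀ x y, Adj x y → 0 < L s(x,y)) (hVR : ∀ v ∈ VR, IsPick v) :
    ∃ w, Good L VR w := by
  obtain ⟨w0, hw0⟩ := exists_feas hVR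
  have hfin : {w | Feas VR w ∧ ∀ e, w e ≤ 2}.Finite :=
    (Set.finite_Icc (0 : Sym2 (TBV (n+1) m) → ℕ) (fun _ => 2)).subset
      fun w hw => ⟨fun e => Nat.zero_le _, hw.2⟩
  obtain ⟨w1, hw1, hmin⟩ := Set.exists_min_image _ (cost L) hfin ⟨nm w0, nm_feas hw0, nm_le2⟩
  have hopt : Opt L VR w1 := ⟨hw1.1, fun u hu =>
    (hmin (nm u) ⟨nm_feas hu, nm_le2⟩).trans (cost_mono L u _ nm_le (posL hL hu))⟩
  obtain ⟨w, h1, h2⟩ := (measure fun w : Sym2 (TBV (n+1) m) → ℕ => (Dset w).card).wf.has_min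
    {w | Opt L VR w} ⟨w1, hopt⟩
  exact ⟨w, h1, fun u hu => not_lt.1 (h2 u hu)⟩

end Opt

/-- Theorem 5: in a two-block warehouse graph (with symmetric positive edge
lengths, corresponding horizontal edges on the three cross-aisles of equal
lengths, and every subaisle of the same vertical length `d`), for any required
set `VR` of picking vertices there exists an optimal tour — a tour visiting
all vertices of `VR` of minimum length among such tours — that traverses each
subaisle other than the topmost-left subaisle `(0,0)` at most once. -/
theorem exists_optimal_tour_single_traversing
    {n : ℕ} {m : Fin (n + 1) → Fin 2 → ℕ}
    (len : TBV (n + 1) m → TBV (n + 1) m → ℝ) (d : ℝ)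
    (hsymm : ∀ x y, len x y = len y x)
    (hpos : ∀ x y, Adj x y → 0 < len x y)
    (hcross : ∀ (i i' : Fin (n + 1)), (i' : ℕ) = (i : ℕ) + 1 →
      ∀ j j' : Fin 3, len (art i j) (art i' j) = len (art i j') (art i' j'))
    (hvert : ∀ i j, pathLen len (subPath i j) = d)
    (VR : Set (TBV (n + 1) m)) (hVR : ∀ v ∈ VR, IsPick v) :
    ∃ r : List (TBV (n + 1) m),
      IsTourFrom (art 0 0) r ∧ (∀ v ∈ VR, v ∈ r) ∧
      (∀ r', IsTourFrom (art 0 0) r' → (∀ v ∈ VR, v ∈ r') →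
        pathLen len r ≤ pathLen len r') ∧
      ∀ (i : Fin (n + 1)) (j : Fin 2), ¬(i = 0 ∧ j = 0) →
        occCount (subPath i j) r + occCount (subPath i j).reverse r ≤ 1 := by

  classical
  have hL : ∀ x y, Adj x y → 0 < (Sym2.lift ⟨len, hsymm⟩ : Sym2 _ → ℝ) s(x,y) :=
    fun x y h => by simpa using hpos x y h
  have hcr : ∀ k k', nb k k' → ∀ j j', (Sym2.lift ⟨len, hsymm⟩ : Sym2 _ → ℝ) s(art k j, art k' j) =
      (Sym2.lift ⟨len, hsymm⟩ : Sym2 _ → ℝ) s(art k j', art k' j') := by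
    intro k k' h j j'
    simp only [Sym2.lift_mk]
    rcases h with h | h
    · exact hcross k k' h j j'
    · rw [hsymm, hcross k' k h j j', hsymm]
  have hv : ∀ i j, cost (Sym2.lift ⟨len, hsymm⟩) (ec (subPath (m := m) i j)) = d :=
    fun i j => by rw [cost_ec, hvert]
  obtain ⟨w, hw⟩ := exists_good hL hVR
  have hf := hw.1.1
  have hloop : ∀ x, w s(x,x) = 0 := fun x => by
    by_contra h
    exact adj_irrefl x (hf.adj x x (Nat.pos_of_ne_zero h))
  obtain ⟨r, hr1, hr2, hr3⟩ := euler w hloop hf.even (art 0 0)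
  refine ⟨r, ⟨hr1.head, hr1.last, (isChain_of_ec r hr2).imp fun a b h => hf.adj a b h⟩,
    fun v hvv => hr3 v (hf.conn v hvv), fun r' hr' hvis => ?_, fun i j hij => ?_⟩
  · have hwk := wk_of r' _ _ hr'.1 hr'.2.1
    have hch : r'.IsChain Adj := hr'.2.2
    have hne : r'.IsChain (· ≠ ·) := hch.imp fun a b h hab => by
      subst hab; exact adj_irrefl _ h
    have hf' : Feas VR (ec r') := by
      refine ⟨fun x y h => ?_, fun v => ?_, fun v hvv => hwk.cn (fun _ h => h) v (hvis v hvv)⟩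
      · obtain ⟨A, x', y', B, h1, h2⟩ := ec_mem _ _ h
        subst h1
        have h3 : Adj x' y' := by
          have := (List.isChain_append.1 hch).2.1
          exact (List.isChain_cons_cons.1 this).1
        rcases Sym2.eq_iff.1 h2 with ⟨rfl, rfl⟩ | ⟨rfl, rfl⟩
        · exact h3
        · exact adj_symm h3
      · have := hwk.parity hne v
        rw [Nat.even_iff] at *
        omega
    have h1 := hw.1.2 _ hf'
    have h2 := cost_mono _ w (ec r) hr2 (posL hL hf)
    rw [cost_ec] at h1 h2
    exact h2.trans h1
  · have hn : (i,j) ∉ Dset w := fun h => lemL hL d hcr hv hVR _ w i j rfl hw h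
    rw [mem_Dset] at hn
    push Not at hn
    obtain ⟨e, he1, he2⟩ := hn (by simpa using hij)
    have h1 := occ_le (subPath i j) (subPath_nodup i j) e he1 r
    have h2 := hr2 e
    convert h1.trans (h2.trans (by omega : w e ≤ 1)) using 2

end TwoBlock
end
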